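/- arXiv:2207.09797 — 3 statements merged into one kernel-verified Lean document; each statement's English description precedes it below -/
import Mathlib

section
/- Let G be a graph with independence number α = α(G), let t ≥ 1 be an integer, let M be a perfect matching of G, let C be an M-alternating cycle, and let P ⊆ C be an M-alternating path with w_M(P) ≥ 2t·4^α. Then P contains at least t pairwise disjoint negative skips. Symmetrically, if w_M(P) ≤ −2t·4^α, then P contains at least t pairwise disjoint positive skips. -/
open Finset

/-- `M` is (the edge set of) a perfect matching of `G`: all its edges are edges of `G` and
every vertex belongs to exactly one edge of `M`. -/
def IsPM {V : Type*} [DecidableEq V] (G : SimpleGraph V) (M : Finset (Sym2 V)) : Prop :=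
  ↑M ⊆ G.edgeSet ∧ ∀ v : V, ∃! e, e ∈ M ∧ v ∈ e

/-- Number of red edges in the edge set `F` (the coloring `red` marks the red edges). -/
def redCount {V : Type*} [DecidableEq V] (red : Sym2 V → Bool) (F : Finset (Sym2 V)) : ℕ :=
  (F.filter fun e => red e = true).card

/-- Number of blue edges in the edge set `F`. -/
def blueCount {V : Type*} [DecidableEq V] (red : Sym2 V → Bool) (F : Finset (Sym2 V)) : ℕ :=
  (F.filter fun e => red e = false).card

/-- The weight `w_M(e)`: 0 for blue edges, +1 for red non-matching edges, −1 for red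
matching edges. -/
def wt {V : Type*} [DecidableEq V] (red : Sym2 V → Bool) (M : Finset (Sym2 V))
    (e : Sym2 V) : ℤ :=
  if red e then (if e ∈ M then -1 else 1) else 0

/-- `w_M(F)`, the total weight of an edge set `F`. -/
def wSum {V : Type*} [DecidableEq V] (red : Sym2 V → Bool) (M F : Finset (Sym2 V)) : ℤ :=
  ∑ e ∈ F, wt red M e

/-- A list of edges alternates with respect to the matching `M`: consecutive edges are
alternately in and out of `M`. -/
def altList {V : Type*} [DecidableEq V] (M : Finset (Sym2 V)) (l : List (Sym2 V)) : Prop :=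
  l.Chain' fun e f => ¬((e ∈ M) ↔ (f ∈ M))

/-- `C` is (the edge set of) an `M`-alternating cycle in `G`: it is traced by a cycle walk
whose edges alternate (cyclically) between `M` and non-`M` edges. -/
def IsAltCycle {V : Type*} [DecidableEq V] (G : SimpleGraph V)
    (M C : Finset (Sym2 V)) : Prop :=
  ∃ (v : V) (p : G.Walk v v), p.IsCycle ∧ p.edges.toFinset = C ∧
    altList M (p.edges ++ p.edges.take 1)

/-- `P` is (the edge set of) an `M`-alternating path in `G`. -/
def IsAltPath {V : Type*} [DecidableEq V] (G : SimpleGraph V)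
    (M P : Finset (Sym2 V)) : Prop :=
  ∃ (u v : V) (p : G.Walk u v), p.IsPath ∧ p.edges.toFinset = P ∧ altList M p.edges

/-- The symmetric difference of two edge sets. -/
def sd {V : Type*} [DecidableEq V] (M M' : Finset (Sym2 V)) : Finset (Sym2 V) :=
  (M \ M') ∪ (M' \ M)

/-- The set of vertices covered by an edge set. -/
def edgeVerts {V : Type*} (F : Finset (Sym2 V)) : Set V := {v | ∃ e ∈ F, v ∈ e}

/-- `𝒞` is a set of pairwise vertex-disjoint `M`-alternating cycles of `G`. -/
def IsAltCycleSet {V : Type*} [DecidableEq V] (G : SimpleGraph V) (M : Finset (Sym2 V))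
    (𝒞 : Finset (Finset (Sym2 V))) : Prop :=
  (∀ C ∈ 𝒞, IsAltCycle G M C) ∧
    (𝒞 : Set (Finset (Sym2 V))).Pairwise fun C C' => Disjoint (edgeVerts C) (edgeVerts C')

/-- A skip on the `M`-alternating cycle `C` (with respect to the coloring `red`):
two non-matching chords `e1 ≠ e2` of `C`, not edges of `C`, such that replacing two
stretches of `C` by them yields a strictly shorter `M`-alternating cycle `C'` whose weight
differs from that of `C` by at most 4 in absolute value. -/
structure Skip {V : Type*} [DecidableEq V] (G : SimpleGraph V) (red : Sym2 V → Bool)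
    (M C : Finset (Sym2 V)) where
  e1 : Sym2 V
  e2 : Sym2 V
  C' : Finset (Sym2 V)
  hne : e1 ≠ e2
  he1G : e1 ∈ G.edgeSet
  he2G : e2 ∈ G.edgeSet
  he1M : e1 ∉ M
  he2M : e2 ∉ M
  he1C : e1 ∉ C
  he2C : e2 ∉ C
  halt : IsAltCycle G M C'
  hmem1 : e1 ∈ C'
  hmem2 : e2 ∈ C'
  hsub : C' \ {e1, e2} ⊆ C
  hsmall : C'.card < C.card
  hwbound : |wSum red M C' - wSum red M C| ≤ 4

/-- The weight `w(S) = w_M(C') − w_M(C)` of a skip. -/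
def Skip.w {V : Type*} [DecidableEq V] {G : SimpleGraph V} {red : Sym2 V → Bool}
    {M C : Finset (Sym2 V)} (S : Skip G red M C) : ℤ :=
  wSum red M S.C' - wSum red M C

/-- The skip `S` is contained in the path `P` along `C`: the stretch of `C` removed by
the skip lies on `P`. -/
def Skip.In {V : Type*} [DecidableEq V] {G : SimpleGraph V} {red : Sym2 V → Bool}
    {M C : Finset (Sym2 V)} (S : Skip G red M C) (P : Finset (Sym2 V)) : Prop :=
  C \ S.C' ⊆ P

/-- Two skips on `C` are disjoint: they are contained in disjoint paths along `C`. -/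
def Skip.Disj {V : Type*} [DecidableEq V] {G : SimpleGraph V} {red : Sym2 V → Bool}
    {M C : Finset (Sym2 V)} (S1 S2 : Skip G red M C) : Prop :=
  ∃ P1 P2 : Finset (Sym2 V), P1 ⊆ C ∧ P2 ⊆ C ∧ Disjoint P1 P2 ∧
    IsAltPath G M P1 ∧ IsAltPath G M P2 ∧ S1.In P1 ∧ S2.In P2

/-- A skip living on one of the cycles of the family `𝒞`. -/
structure SkipOn {V : Type*} [DecidableEq V] (G : SimpleGraph V) (red : Sym2 V → Bool)
    (M : Finset (Sym2 V)) (𝒞 : Finset (Finset (Sym2 V))) where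
  C : Finset (Sym2 V)
  hC : C ∈ 𝒞
  S : Skip G red M C

/-- Two skips on cycles of `𝒞` are disjoint: either they live on different
(vertex-disjoint) cycles, or they are disjoint skips on the same cycle. -/
def SkipOn.Disj {V : Type*} [DecidableEq V] {G : SimpleGraph V} {red : Sym2 V → Bool}
    {M : Finset (Sym2 V)} {𝒞 : Finset (Finset (Sym2 V))}
    (T1 T2 : SkipOn G red M 𝒞) : Prop :=
  T1.C ≠ T2.C ∨ ∃ h : T1.C = T2.C, Skip.Disj (h ▸ T1.S) T2.S

/-- `𝒞` contains a 0-skip set: a nonempty collection of pairwise disjoint skips on cycles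
of `𝒞` of total weight 0. -/
def HasZeroSkipSet {V : Type*} [DecidableEq V] (G : SimpleGraph V) (red : Sym2 V → Bool)
    (M : Finset (Sym2 V)) (𝒞 : Finset (Finset (Sym2 V))) : Prop :=
  ∃ L : List (SkipOn G red M 𝒞), L ≠ [] ∧ L.Pairwise SkipOn.Disj ∧
    (L.map fun T => T.S.w).sum = 0

/-- `𝒞` contains a 0-skip-cycle set: a nonempty collection of pairwise disjoint skips on
cycles of `𝒞` and/or whole cycles `D ⊆ 𝒞` (the skips living on cycles not in `D`), such
that the total weight of the skips minus the total weight of the cycles is 0. -/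
def HasZeroSkipCycleSet {V : Type*} [DecidableEq V] (G : SimpleGraph V)
    (red : Sym2 V → Bool) (M : Finset (Sym2 V)) (𝒞 : Finset (Finset (Sym2 V))) : Prop :=
  ∃ (L : List (SkipOn G red M 𝒞)) (D : Finset (Finset (Sym2 V))),
    D ⊆ 𝒞 ∧ (L ≠ [] ∨ D.Nonempty) ∧ L.Pairwise SkipOn.Disj ∧ (∀ T ∈ L, T.C ∉ D) ∧
      (L.map fun T => T.S.w).sum - (∑ C ∈ D, wSum red M C) = 0

/-- The independence number `α(G)`: the maximum size of a set of pairwise non-adjacent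
vertices. -/
noncomputable def indepNum {V : Type*} (G : SimpleGraph V) : ℕ :=
  sSup {n | ∃ s : Finset V, s.card = n ∧ (s : Set V).Pairwise fun u v => ¬ G.Adj u v}

/-- `RamseyProp N s t`: every graph on `N` vertices contains a clique of size `s` or an
independent set of size `t`. -/
def RamseyProp (N s t : ℕ) : Prop :=
  ∀ H : SimpleGraph (Fin N),
    (∃ A : Finset (Fin N), A.card = s ∧ (A : Set (Fin N)).Pairwise H.Adj) ∨
    (∃ B : Finset (Fin N), B.card = t ∧ (B : Set (Fin N)).Pairwise fun u v => ¬ H.Adj u v)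

/-- The Ramsey number `R(s,t)`: the smallest `N` such that every graph on `N` vertices
contains a clique of size `s` or an independent set of size `t`. -/
noncomputable def ramsey (s t : ℕ) : ℕ := sInf {N | RamseyProp N s t}

theorem ramsey_aux {ι : Type*} [DecidableEq ι] (r1 r2 : ι → ι → Prop)
    (s1 : ∀ a b, r1 a b → r1 b a) (s2 : ∀ a b, r2 a b → r2 b a) (N : ℕ) :
    ∀ (x y : ℕ) (S : Finset ι), x + y = N → 1 ≤ x + y → 2 ^ (x + y) ≤ S.card + 1 →
      (∀ a ∈ S, ∀ b ∈ S, a ≠ b → r1 a b ∨ r2 a b) →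
      (∃ T ⊆ S, T.card = x + 1 ∧ (T : Set ι).Pairwise r1) ∨
      (∃ T ⊆ S, T.card = y + 1 ∧ (T : Set ι).Pairwise r2) := by
  classical
  have : Std.Symm r1 := ⟨s1⟩
  have : Std.Symm r2 := ⟨s2⟩
  induction N with
  | zero => intro x y S h1 h2; omega
  | succ N ih =>
    intro x y S hN hxy hS hr
    have hp : 2 ≤ 2 ^ (x + y) := by
      calc 2 = 2 ^ 1 := by norm_num
        _ ≤ _ := Nat.pow_le_pow_right (by norm_num) hxy
    obtain ⟨v, hv⟩ : S.Nonempty := by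
      rw [← Finset.card_pos]; omega
    rcases Nat.eq_zero_or_pos x with hx | hx
    · left
      exact ⟨{v}, by simpa using hv, by simp [hx], by simp⟩
    rcases Nat.eq_zero_or_pos y with hy | hy
    · right
      exact ⟨{v}, by simpa using hv, by simp [hy], by simp⟩
    set A := (S.erase v).filter (fun u => r1 v u) with hA
    set B := (S.erase v).filter (fun u => ¬ r1 v u) with hB
    have hcard : A.card + B.card = S.card - 1 := by
      rw [hA, hB, Finset.card_filter_add_card_filter_not, Finset.card_erase_of_mem hv]
    have hpow : 2 ^ (x + y) = 2 * 2 ^ N := by rw [hN, pow_succ]; ring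
    have hor : 2 ^ N ≤ A.card + 1 ∨ 2 ^ N ≤ B.card + 1 := by omega
    have hAS : A ⊆ S := (Finset.filter_subset _ _).trans (Finset.erase_subset _ _)
    have hBS : B ⊆ S := (Finset.filter_subset _ _).trans (Finset.erase_subset _ _)
    have hvA : v ∉ A := by simp [hA]
    have hvB : v ∉ B := by simp [hB]
    rcases hor with h | h
    · rcases ih (x - 1) y A (by omega) (by omega) (by rwa [show x - 1 + y = N by omega])
        (fun a ha b hb => hr a (hAS ha) b (hAS hb)) with ⟨T, hT, hTc, hTp⟩ | ⟨T, hT, hTc, hTp⟩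
      · left
        refine ⟨insert v T, Finset.insert_subset hv (hT.trans hAS), ?_, ?_⟩
        · rw [Finset.card_insert_of_notMem (fun h => hvA (hT h))]; omega
        · rw [Finset.coe_insert, Set.pairwise_insert_of_symm]
          refine ⟨hTp, fun b hb _ => ?_⟩
          exact (Finset.mem_filter.1 (hT hb)).2
      · right
        exact ⟨T, hT.trans hAS, hTc, hTp⟩
    · rcases ih x (y - 1) B (by omega) (by omega) (by rwa [show x + (y - 1) = N by omega])
        (fun a ha b hb => hr a (hBS ha) b (hBS hb)) with ⟨T, hT, hTc, hTp⟩ | ⟨T, hT, hTc, hTp⟩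
      · left
        exact ⟨T, hT.trans hBS, hTc, hTp⟩
      · right
        refine ⟨insert v T, Finset.insert_subset hv (hT.trans hBS), ?_, ?_⟩
        · rw [Finset.card_insert_of_notMem (fun h => hvB (hT h))]; omega
        · rw [Finset.coe_insert, Set.pairwise_insert_of_symm]
          refine ⟨hTp, fun b hb hne => ?_⟩
          have h1 := (Finset.mem_filter.1 (hT hb)).2
          exact (hr v hv b (hBS (hT hb)) hne).resolve_left h1

theorem indep_card_le {V : Type*} [Fintype V] (G : SimpleGraph V) (s : Finset V)
    (hs : (s : Set V).Pairwise fun u v => ¬ G.Adj u v) : s.card ≤ indepNum G := by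
  apply le_csSup
  · refine ⟨Fintype.card V, ?_⟩
    rintro n ⟨s, rfl, _⟩
    exact Finset.card_le_univ s
  · exact ⟨s, rfl, hs⟩

/-- among enough index pairs, two are adjacent in both coordinates -/
theorem pair_adj {V : Type*} [Fintype V] [DecidableEq V] (G : SimpleGraph V)
    (a b : ℕ → V) (S : Finset ℕ) (ha : Set.InjOn a S) (hb : Set.InjOn b S)
    (hpos : 1 ≤ indepNum G) (hS : 4 ^ indepNum G ≤ S.card + 1) :
    ∃ i ∈ S, ∃ j ∈ S, i < j ∧ G.Adj (a i) (a j) ∧ G.Adj (b i) (b j) := by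
  by_contra hcon
  push Not at hcon
  have key := ramsey_aux (fun i j => ¬ G.Adj (a i) (a j)) (fun i j => ¬ G.Adj (b i) (b j))
    (fun i j h h' => h h'.symm) (fun i j h h' => h h'.symm) (indepNum G + indepNum G)
    (indepNum G) (indepNum G) S rfl (by omega)
    (by rw [← two_mul, pow_mul]; simpa using hS)
    (by
      intro i hi j hj hij
      rcases lt_or_gt_of_ne hij with h | h
      · by_cases h1 : G.Adj (a i) (a j)
        · exact Or.inr (hcon i hi j hj h h1)
        · exact Or.inl h1
      · by_cases h1 : G.Adj (a j) (a i)
        · exact Or.inr (fun h2 => hcon j hj i hi h h1 h2.symm)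
        · exact Or.inl (fun h2 => h1 h2.symm))
  have fin : ∀ (f : ℕ → V), Set.InjOn f S → ∀ T ⊆ S, T.card = indepNum G + 1 →
      (T : Set ℕ).Pairwise (fun i j => ¬ G.Adj (f i) (f j)) → False := by
    intro f hf T hT hc hp
    have h1 : (T.image f).card = T.card :=
      Finset.card_image_of_injOn (hf.mono (by exact_mod_cast hT))
    have h2 := indep_card_le G (T.image f) (by
      intro u hu v hv huv
      simp only [Finset.coe_image, Set.mem_image, Finset.mem_coe] at hu hv
      obtain ⟨i, hi, rfl⟩ := hu
      obtain ⟨j, hj, rfl⟩ := hv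
      exact hp hi hj (fun h => huv (by rw [h])))
    omega
  rcases key with ⟨T, hT, hc, hp⟩ | ⟨T, hT, hc, hp⟩
  · exact fin a ha T hT hc hp
  · exact fin b hb T hT hc hp

/-- iterating a step which finds a good segment -/
theorem segs_iter (r : ℕ) (B : ℕ → ℤ) (Q : ℕ → ℕ → Prop)
    (hstep : ∀ p, p ≤ r → 2 ≤ B p → ∃ x y, p ≤ x ∧ x < y ∧ y ≤ r ∧ Odd x ∧ Even y ∧ Q x y ∧
      B p - 2 ≤ B y) (N : ℕ) : ∀ p, p ≤ r → 2 * (N : ℤ) ≤ B p →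
    ∃ x y : ℕ → ℕ, (∀ m < N, p ≤ x m ∧ x m < y m ∧ y m ≤ r ∧ Odd (x m) ∧ Even (y m) ∧
      Q (x m) (y m)) ∧ ∀ m m', m < m' → m' < N → y m < x m' := by
  induction N with
  | zero => intro p _ _; exact ⟨id, id, by simp, by simp⟩
  | succ N ih =>
    intro p hp hB
    push_cast at hB
    obtain ⟨x0, y0, h1, h2, h3, h4, h5, h6, h7⟩ := hstep p hp (by omega)
    obtain ⟨x, y, hx, hxy⟩ := ih y0 h3 (by omega)
    refine ⟨fun m => Nat.casesOn m x0 x, fun m => Nat.casesOn m y0 y, ?_, ?_⟩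
    · intro m hm
      cases m with
      | zero => exact ⟨h1, h2, h3, h4, h5, h6⟩
      | succ m =>
        obtain ⟨g1, g⟩ := hx m (by omega)
        exact ⟨by simp only; omega, g⟩
    · intro m m' hm hm'
      cases m' with
      | zero => omega
      | succ m' =>
        cases m with
        | zero =>
          obtain ⟨g1, _, _, g2, _⟩ := hx m' (by omega)
          obtain ⟨k, hk⟩ := h5
          obtain ⟨l, hl⟩ := g2
          show y0 < x m'
          omega
        | succ m => exact hxy m m' (by omega) (by omega)

theorem step_pos (F : ℕ → ℤ) (he : ∀ k, Even k → F (k+1) = F k ∨ F (k+1) = F k - 1)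
    (ho : ∀ k, Odd k → F (k+1) = F k ∨ F (k+1) = F k + 1) (r p : ℕ) (hp : p ≤ r)
    (hF : F p + 2 ≤ F r) : ∃ x y, p ≤ x ∧ x < y ∧ y ≤ r ∧ Odd x ∧ Even y ∧
      F y = F x + 2 ∧ F y = F p + 2 := by
  classical
  have first : ∀ h : ℤ, 0 < h → F p + h ≤ F r → ∃ z, p ≤ z ∧ z + 1 ≤ r ∧ Odd z ∧
      F (z+1) = F p + h ∧ F z = F p + h - 1 ∧ ∀ k, p ≤ k → k ≤ z → F k < F p + h := by
    intro h hh hr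
    have hex : ∃ k, p ≤ k ∧ F p + h ≤ F k := ⟨r, hp, hr⟩
    have hs := Nat.find_spec hex
    have hm : ∀ k < Nat.find hex, ¬ (p ≤ k ∧ F p + h ≤ F k) := fun k hk => Nat.find_min hex hk
    have hle : Nat.find hex ≤ r := Nat.find_min' hex ⟨hp, hr⟩
    generalize Nat.find hex = z at hs hm hle
    have hz : p < z := by
      rcases hs.1.eq_or_lt with h1 | h1
      · subst h1; omega
      · exact h1
    obtain ⟨z, rfl⟩ : ∃ z', z = z' + 1 := ⟨z - 1, by omega⟩
    have h1 : F z < F p + h := by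
      have := hm z (by omega)
      by_contra h2
      exact this ⟨by omega, by omega⟩
    rcases Nat.even_or_odd z with h2 | h2
    · rcases he z h2 with h3 | h3 <;> omega
    · refine ⟨z, by omega, hle, h2, ?_, ?_, ?_⟩
      · rcases ho z h2 with h3 | h3 <;> omega
      · rcases ho z h2 with h3 | h3 <;> omega
      · intro k hk hkz
        have := hm k (by omega)
        by_contra h2
        exact this ⟨by omega, by omega⟩
  obtain ⟨x, hx1, hx2, hx3, hx4, hx5, hx6⟩ := first 1 (by norm_num) (by omega)
  obtain ⟨y, hy1, hy2, hy3, hy4, hy5, hy6⟩ := first 2 (by norm_num) (by omega)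
  refine ⟨x, y + 1, hx1, ?_, hy2, hx3, hy3.add_one, by omega, by omega⟩
  by_contra hcon
  have := hx6 (y+1) (by omega) (by omega)
  omega

theorem step_neg (F : ℕ → ℤ) (he : ∀ k, Even k → F (k+1) = F k ∨ F (k+1) = F k - 1)
    (ho : ∀ k, Odd k → F (k+1) = F k ∨ F (k+1) = F k + 1) (r p : ℕ) (hr : Even r) (hp : p ≤ r)
    (hF : F r + 2 ≤ F p) : ∃ x y, p ≤ x ∧ x < y ∧ y ≤ r ∧ Odd x ∧ Even y ∧
      F y = F x - 1 ∧ F p - 2 ≤ F y := by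
  classical
  obtain ⟨x, hx1, hx2, hx3, hx4⟩ : ∃ x, p ≤ x ∧ x ≤ r ∧ Odd x ∧ F p - 1 ≤ F x := by
    rcases Nat.even_or_odd p with h | h
    · refine ⟨p + 1, by omega, ?_, h.add_one, ?_⟩
      · rcases hp.eq_or_lt with h1 | h1
        · subst h1; omega
        · exact h1
      · rcases he p h with h3 | h3 <;> omega
    · exact ⟨p, le_rfl, hp, h, by omega⟩
  have hxr : x + 1 ≤ r := by
    obtain ⟨k, hk⟩ := hr
    obtain ⟨l, hl⟩ := hx3
    omega
  have hex : ∃ k, F (x + 1 + 2 * k) ≤ F x - 1 := by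
    refine ⟨(r - x - 1) / 2, ?_⟩
    have : x + 1 + 2 * ((r - x - 1) / 2) = r := by
      obtain ⟨k, hk⟩ := hr
      obtain ⟨l, hl⟩ := hx3
      omega
    rw [this]; omega
  have hle : Nat.find hex ≤ (r - x - 1) / 2 := by
    apply Nat.find_min'
    have : x + 1 + 2 * ((r - x - 1) / 2) = r := by
      obtain ⟨k, hk⟩ := hr
      obtain ⟨l, hl⟩ := hx3
      omega
    rw [this]; omega
  have hs := Nat.find_spec hex
  have hm : ∀ k < Nat.find hex, ¬ (F (x + 1 + 2 * k) ≤ F x - 1) :=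
    fun k hk => Nat.find_min hex hk
  generalize Nat.find hex = k at hs hm hle
  have hxe : ∀ k, Even (x + 1 + 2 * k) := by
    intro k
    obtain ⟨l, hl⟩ := hx3
    exact ⟨l + 1 + k, by omega⟩
  cases k with
  | zero =>
    have := ho x hx3
    simp only [mul_zero, add_zero] at hs
    omega
  | succ k =>
    have h1 := hm k (by omega)
    have h2 := he _ (hxe k)
    have h3 := ho _ (hxe k).add_one
    have h4 : x + 1 + 2 * (k + 1) = x + 1 + 2 * k + 1 + 1 := by ring
    have h5 : F (x + 1 + 2 * (k+1)) = F x - 1 := by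
      rw [h4] at hs ⊢
      omega
    exact ⟨x, x + 1 + 2 * (k + 1), hx1, by omega, by omega, hx3, hxe _, h5, by omega⟩

/-- walk from a function -/
theorem mkWalk {V : Type*} (G : SimpleGraph V) (f : ℕ → V) (m : ℕ)
    (h : ∀ k < m, G.Adj (f k) (f (k+1))) :
    ∃ p : G.Walk (f 0) (f m), p.edges = (List.range m).map (fun k => s(f k, f (k+1))) ∧
      p.support = (List.range (m+1)).map f := by
  induction m with
  | zero => exact ⟨SimpleGraph.Walk.nil, by simp, by simp⟩
  | succ m ih =>
    obtain ⟨p, hp1, hp2⟩ := ih (fun k hk => h k (by omega))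
    refine ⟨p.concat (h m (by omega)), ?_, ?_⟩
    · rw [SimpleGraph.Walk.edges_concat, hp1, List.range_succ, List.map_append]
      simp
    · rw [SimpleGraph.Walk.support_concat, hp2, List.range_succ (n := m+1), List.map_append]
      simp

theorem mkAltPath {V : Type*} [DecidableEq V] (G : SimpleGraph V) (M : Finset (Sym2 V))
    (c : ℕ → V) (a b : ℕ) (hab : a ≤ b)
    (hadj : ∀ k, G.Adj (c k) (c (k+1)))
    (halt : ∀ k, s(c k, c (k+1)) ∈ M ↔ Even k)
    (hinj : ∀ i j, a ≤ i → i ≤ b → a ≤ j → j ≤ b → c i = c j → i = j) :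
    IsAltPath G M ((Finset.Ico a b).image (fun k => s(c k, c (k+1)))) := by
  obtain ⟨p, hp1, hp2⟩ := mkWalk G (fun k => c (a + k)) (b - a) (fun k _ => hadj (a + k))
  refine ⟨_, _, p, ?_, ?_, ?_⟩
  · rw [SimpleGraph.Walk.isPath_def, hp2]
    apply List.Nodup.map_on _ List.nodup_range
    intro x hx y hy hxy
    rw [List.mem_range] at hx hy
    have := hinj (a + x) (a + y) (by omega) (by omega) (by omega) (by omega) hxy
    omega
  · rw [hp1]
    ext e
    simp only [List.mem_toFinset, List.mem_map, List.mem_range, Finset.mem_image, Finset.mem_Ico]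
    constructor
    · rintro ⟨k, hk, rfl⟩
      exact ⟨a + k, by omega, rfl⟩
    · rintro ⟨k, hk, rfl⟩
      refine ⟨k - a, by omega, ?_⟩
      rw [← add_assoc, show a + (k - a) = k by omega]
  · rw [hp1]
    show List.IsChain _ _
    rw [List.isChain_iff_getElem]
    intro i hi
    simp only [List.getElem_map, List.getElem_range, ← add_assoc]
    rw [halt (a + i), halt (a + i + 1), Nat.even_add_one]
    tauto

theorem mkAltCycle {V : Type*} [DecidableEq V] (G : SimpleGraph V) (M : Finset (Sym2 V))
    (f : ℕ → V) (m : ℕ) (hm : 3 ≤ m) (hme : Even m) (h0 : f m = f 0)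
    (hadj : ∀ k < m, G.Adj (f k) (f (k+1)))
    (halt : ∀ k < m, (s(f k, f (k+1)) ∈ M ↔ Even k))
    (hinj : ∀ i j, i < m → j < m → f i = f j → i = j) :
    IsAltCycle G M ((Finset.range m).image (fun k => s(f k, f (k+1)))) := by
  obtain ⟨p, hp1, hp2⟩ := mkWalk G f m hadj
  have hinj' : ∀ i j, i < m → j < m + 1 → f i = f j → i = j ∨ (i = 0 ∧ j = m) := by
    intro i j hi hj hij
    rcases Nat.lt_succ_iff_lt_or_eq.1 hj with h | h
    · exact Or.inl (hinj i j hi h hij)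
    · subst h
      rw [h0] at hij
      exact Or.inr ⟨hinj i 0 hi (by omega) hij, rfl⟩
  have key : ∃ q : G.Walk (f 0) (f 0), q.edges = (List.range m).map (fun k => s(f k, f (k+1))) ∧
      q.support = (List.range (m+1)).map f := by
    refine ⟨p.copy rfl h0, ?_, ?_⟩
    · simpa using hp1
    · simpa using hp2
  obtain ⟨q, hq1, hq2⟩ := key
  refine ⟨_, q, ?_, ?_, ?_⟩
  · rw [SimpleGraph.Walk.isCycle_def]
    refine ⟨?_, ?_, ?_⟩
    · rw [SimpleGraph.Walk.isTrail_def, hq1]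
      apply List.Nodup.map_on _ List.nodup_range
      intro x hx y hy hxy
      rw [List.mem_range] at hx hy
      rw [Sym2.eq_iff] at hxy
      rcases hxy with ⟨h1, h2⟩ | ⟨h1, h2⟩
      · exact hinj x y hx hy h1
      · have g1 := hinj' x (y+1) hx (by omega) h1
        have g2 := hinj' y (x+1) hy (by omega) h2.symm
        omega
    · intro h
      have := congrArg SimpleGraph.Walk.edges h
      rw [hq1] at this
      have := congrArg List.length this
      simp at this
      omega
    · rw [hq2, List.range_succ_eq_map, List.map_cons, List.tail_cons, List.map_map]
      apply List.Nodup.map_on _ List.nodup_range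
      intro x hx y hy hxy
      rw [List.mem_range] at hx hy
      simp only [Function.comp, Nat.succ_eq_add_one] at hxy
      by_cases h1 : x + 1 < m
      · have := hinj' (x+1) (y+1) h1 (by omega) hxy
        omega
      · by_cases h2 : y + 1 < m
        · have := hinj' (y+1) (x+1) h2 (by omega) hxy.symm
          omega
        · omega
  · rw [hq1]
    ext e
    simp
  · rw [hq1]
    show List.IsChain _ _
    rw [List.isChain_iff_getElem]
    intro i hi
    have hlen : i < m := by simp at hi; omega
    rw [List.getElem_append_left (by simpa using hlen)]
    by_cases h : i + 1 < m
    · rw [List.getElem_append_left (by simpa using h)]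
      simp only [List.getElem_map, List.getElem_range]
      rw [halt i hlen, halt (i+1) h, Nat.even_add_one]
      tauto
    · rw [List.getElem_append_right (by simp; omega)]
      simp only [List.getElem_map, List.getElem_range, List.getElem_take]
      have h3 : i + 1 - (List.map (fun k => s(f k, f (k + 1))) (List.range m)).length = 0 := by
        simp; omega
      simp only [h3]
      rw [halt i hlen, halt 0 (by omega)]
      have : i + 1 = m := by omega
      rw [← this, Nat.even_add_one] at hme
      simp [hme]

/-- ℤ-indexed parametrization of an alternating cycle -/
structure ZCyc {V : Type*} (G : SimpleGraph V) (M C : Finset (Sym2 V)) (L : ℕ)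
    (c : ℤ → V) : Prop where
  three : 3 ≤ L
  per : ∀ k, c (k + L) = c k
  inj : ∀ i j, c i = c j → (L : ℤ) ∣ i - j
  adj : ∀ k, G.Adj (c k) (c (k+1))
  flip : ∀ k, (s(c k, c (k+1)) ∈ M ↔ s(c (k+1), c (k+1+1)) ∉ M)
  mem : ∀ e, e ∈ C ↔ ∃ k, e = s(c k, c (k+1))

theorem ZCyc.shift {V : Type*} {G : SimpleGraph V} {M C : Finset (Sym2 V)} {L : ℕ}
    {c : ℤ → V} (h : ZCyc G M C L c) (d : ℤ) : ZCyc G M C L (fun k => c (k + d)) where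
  three := h.three
  per k := by rw [← h.per (k + d)]; congr 1; ring
  inj i j hij := by have := h.inj _ _ hij; simpa using this
  adj k := by have := h.adj (k + d); rwa [show k + d + 1 = k + 1 + d by ring] at this
  flip k := by
    have := h.flip (k + d)
    rwa [show k + d + 1 + 1 = k + 1 + 1 + d by ring, show k + d + 1 = k + 1 + d by ring] at this
  mem e := by
    rw [h.mem]
    constructor
    · rintro ⟨k, rfl⟩
      refine ⟨k - d, ?_⟩
      rw [show k - d + d = k by ring, show k - d + 1 + d = k + 1 by ring]
    · rintro ⟨k, rfl⟩
      refine ⟨k + d, ?_⟩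
      rw [show k + d + 1 = k + 1 + d by ring]

theorem ZCyc.neg {V : Type*} {G : SimpleGraph V} {M C : Finset (Sym2 V)} {L : ℕ}
    {c : ℤ → V} (h : ZCyc G M C L c) : ZCyc G M C L (fun k => c (-k)) where
  three := h.three
  per k := by rw [← h.per (-(k+L))]; congr 1; ring
  inj i j hij := by
    have := h.inj _ _ hij
    rw [show i - j = -(-i - -j) by ring]
    exact (dvd_neg).2 this
  adj k := by have := (h.adj (-k-1)).symm; convert this using 2 <;> ring
  flip k := by
    have := h.flip (-k-1-1)
    rw [show -k-1-1+1+1 = -k by ring, show -k-1-1+1 = -(k+1) by ring,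
      show -k-1-1 = -(k+1+1) by ring] at this
    have s1 : s(c (-k), c (-(k+1))) = s(c (-(k+1)), c (-k)) := Sym2.eq_swap
    have s2 : s(c (-(k+1)), c (-(k+1+1))) = s(c (-(k+1+1)), c (-(k+1))) := Sym2.eq_swap
    rw [s1, s2]
    tauto
  mem e := by
    rw [h.mem]
    constructor
    · rintro ⟨k, rfl⟩
      refine ⟨-k - 1, ?_⟩
      rw [Sym2.eq_swap, show -(-k-1) = k + 1 by ring, show -(-k - 1 + 1) = k by ring]
    · rintro ⟨k, rfl⟩
      refine ⟨-k - 1, ?_⟩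
      rw [Sym2.eq_swap, show -k-1 = -(k+1) by ring, show -(k+1) + 1 = -k by ring]

theorem exists_ZCyc {V : Type*} [DecidableEq V] {G : SimpleGraph V} {M C : Finset (Sym2 V)}
    (hC : IsAltCycle G M C) : ∃ L c, ZCyc G M C L c := by
  obtain ⟨v, p, hp, hpC, halt⟩ := hC
  have h3 := hp.three_le_length
  set L := p.length with hL
  have hLpos : (0 : ℤ) < L := by omega
  have hres : ∀ k : ℤ, ∃ ρ : ℕ, ρ < L ∧ (k % L).toNat = ρ ∧ (L : ℤ) ∣ k - ρ := by
    intro k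
    have h1 := Int.emod_nonneg k hLpos.ne'
    have h2 := Int.emod_lt_of_pos k hLpos
    refine ⟨(k % L).toNat, by omega, rfl, ?_⟩
    rw [Int.toNat_of_nonneg h1]
    exact Int.dvd_self_sub_emod
  have hval : ∀ (k : ℤ) (ρ : ℕ), ρ ≤ L → (L : ℤ) ∣ k - ρ →
      p.getVert (k % L).toNat = p.getVert ρ := by
    intro k ρ hρ hd
    rcases hρ.eq_or_lt with h | h
    · have : k % L = 0 := by
        apply Int.emod_eq_zero_of_dvd
        rw [h] at hd
        have := dvd_add hd (dvd_refl (L : ℤ))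
        simpa using this
      rw [this, h, hL]
      simp
    · have : k % L = ρ := by
        have h1 : k % L = (ρ : ℤ) % L := Int.emod_eq_emod_iff_emod_sub_eq_zero.2
          (Int.emod_eq_zero_of_dvd hd)
        rw [h1, Int.emod_eq_of_lt (by omega) (by omega)]
      rw [this]
      simp
  have hedge : ∀ k : ℤ, ∃ ρ : ℕ, ρ < L ∧ p.getVert (k % L).toNat = p.getVert ρ ∧
      p.getVert ((k+1) % L).toNat = p.getVert (ρ+1) ∧ (L : ℤ) ∣ k - ρ := by
    intro k
    obtain ⟨ρ, h1, h2, h3⟩ := hres k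
    refine ⟨ρ, h1, by rw [h2], hval _ _ h1 ?_, h3⟩
    rw [show k + 1 - ((ρ + 1 : ℕ) : ℤ) = k - ρ by push_cast; ring]
    exact h3
  have hlen : p.edges.length = L := p.length_edges
  have halt' : ∀ ρ : ℕ, ρ + 1 < L → ¬ (s(p.getVert ρ, p.getVert (ρ+1)) ∈ M ↔
      s(p.getVert (ρ+1), p.getVert (ρ+1+1)) ∈ M) := by
    intro ρ hρ
    have h1 := (List.isChain_iff_getElem.1 halt) ρ (by simp; omega)
    rw [List.getElem_append_left (by omega), List.getElem_append_left (by omega),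
      SimpleGraph.Walk.getElem_edges, SimpleGraph.Walk.getElem_edges] at h1
    exact h1
  have halt'' : ∀ ρ : ℕ, ρ + 1 = L → ¬ (s(p.getVert ρ, p.getVert (ρ+1)) ∈ M ↔
      s(p.getVert 0, p.getVert (0+1)) ∈ M) := by
    intro ρ hρ
    have h1 := (List.isChain_iff_getElem.1 halt) ρ (by simp; omega)
    rw [List.getElem_append_left (by omega), List.getElem_append_right (by omega),
      SimpleGraph.Walk.getElem_edges, List.getElem_take] at h1
    have h2 : ρ + 1 - p.edges.length = 0 := by omega
    simp only [h2, SimpleGraph.Walk.getElem_edges] at h1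
    exact h1
  refine ⟨L, fun k => p.getVert (k % L).toNat, ⟨h3, ?_, ?_, ?_, ?_, ?_⟩⟩
  · intro k
    simp
  · intro i j hij
    obtain ⟨a, ha, ha2, ha3⟩ := hres i
    obtain ⟨b, hb, hb2, hb3⟩ := hres j
    simp only [ha2, hb2] at hij
    have := hp.getVert_injOn' (show a ≤ p.length - 1 by omega) (show b ≤ p.length - 1 by omega) hij
    subst this
    have := dvd_sub ha3 hb3
    simpa using this
  · intro k
    obtain ⟨ρ, h1, h2, h3, _⟩ := hedge k
    simp only [h2, h3]
    exact p.adj_getVert_succ h1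
  · intro k
    obtain ⟨ρ, h1, h2, h3, h4⟩ := hedge k
    have h4' : (L : ℤ) ∣ k + 1 - ((ρ + 1 : ℕ) : ℤ) := by
      rw [show k + 1 - ((ρ + 1 : ℕ) : ℤ) = k - ρ by push_cast; ring]
      exact h4
    by_cases h : ρ + 1 < L
    · have g := hval (k+1+1) (ρ+1+1) h (by
        rw [show k + 1 + 1 - ((ρ + 1 + 1 : ℕ) : ℤ) = k - ρ by push_cast; ring]
        exact h4)
      have := halt' ρ h
      simp only [h2, h3, g]
      tauto
    · have hLr : ρ + 1 = L := by omega
      have d0 : (L : ℤ) ∣ k + 1 := by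
        rw [hLr] at h4'
        have := dvd_add h4' (dvd_refl (L : ℤ))
        simpa using this
      have g0 := hval (k+1) 0 (by omega) (by simpa using d0)
      have g := hval (k+1+1) (0+1) (by omega) (by simpa using d0)
      have := halt'' ρ hLr
      rw [g0] at h3
      simp only [h2, g0, g]
      rw [← h3] at this
      tauto
  · intro e
    rw [← hpC, List.mem_toFinset]
    constructor
    · intro he
      obtain ⟨i, hi, rfl⟩ := List.mem_iff_getElem.1 he
      refine ⟨i, ?_⟩
      rw [SimpleGraph.Walk.getElem_edges, hval i i (by omega) (by simp),
        hval (i+1) (i+1) (by omega) (by simp)]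
    · rintro ⟨k, rfl⟩
      obtain ⟨ρ, h1, h2, h3, h4⟩ := hedge k
      rw [h2, h3, SimpleGraph.Walk.mk_mem_edges_iff_exists]
      exact ⟨ρ, h1, rfl⟩

/-- ℕ-indexed parametrization -/
structure NCyc {V : Type*} (G : SimpleGraph V) (M C : Finset (Sym2 V)) (L : ℕ)
    (c : ℕ → V) : Prop where
  three : 3 ≤ L
  even : Even L
  per : ∀ k, c (k + L) = c k
  inj : ∀ i j, i < j → c i = c j → i + L ≤ j
  dvd : ∀ i j, c i = c j → (L : ℤ) ∣ (i : ℤ) - j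
  adj : ∀ k, G.Adj (c k) (c (k+1))
  alt : ∀ k, (s(c k, c (k+1)) ∈ M ↔ Even k)
  mem : ∀ e, e ∈ C ↔ ∃ k, e = s(c k, c (k+1))

theorem ZCyc.toN {V : Type*} {G : SimpleGraph V} {M C : Finset (Sym2 V)} {L : ℕ}
    {c : ℤ → V} (h : ZCyc G M C L c) (h0 : s(c 0, c (0+1)) ∈ M) :
    NCyc G M C L (fun k : ℕ => c k) := by
  have alt : ∀ k : ℕ, (s(c k, c ((k+1 : ℕ))) ∈ M ↔ Even k) := by
    intro k
    induction k with
    | zero => simpa using h0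
    | succ k ih =>
      have := h.flip k
      push_cast at ih ⊢
      rw [Nat.even_add_one, ← ih]
      tauto
  have per : ∀ k : ℕ, c ((k + L : ℕ)) = c k := fun k => by
    push_cast; exact h.per k
  have mul : ∀ (k : ℤ) (n : ℕ), c (k + n * L) = c k := by
    intro k n
    induction n with
    | zero => simp
    | succ n ih =>
      rw [← ih, ← h.per (k + n * L)]; congr 1; push_cast; ring
  refine ⟨h.three, ?_, per, ?_, fun i j => h.inj i j, ?_, alt, ?_⟩
  · have h1 := alt L
    have h2 := alt 0
    have e1 := per 0
    have e2 := per 1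
    rw [show 0 + L = L by omega] at e1
    rw [show 1 + L = L + 1 by omega] at e2
    rw [e1, e2] at h1
    exact h1.1 (h2.2 (by simp))
  · intro i j hij he
    have := h.inj j i he.symm
    have := Int.le_of_dvd (by omega) this
    omega
  · intro k
    have := h.adj k
    push_cast
    exact this
  · intro e
    rw [h.mem]
    constructor
    · rintro ⟨k, rfl⟩
      refine ⟨(k + k.natAbs * L).toNat, ?_⟩
      have hL := h.three
      have hnn : 0 ≤ k + k.natAbs * L := by
        have h1 : (k.natAbs : ℤ) * 1 ≤ k.natAbs * L := by
          apply mul_le_mul_of_nonneg_left <;> omega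
        omega
      rw [Nat.cast_add, Nat.cast_one, Int.toNat_of_nonneg hnn]
      rw [mul, show k + k.natAbs * (L : ℤ) + 1 = (k + 1) + k.natAbs * L by ring, mul]
    · rintro ⟨k, rfl⟩
      exact ⟨k, by push_cast; rfl⟩

theorem exists_aligned {V : Type*} [DecidableEq V] {G : SimpleGraph V} {M C P : Finset (Sym2 V)}
    (hC : IsAltCycle G M C) (hP : IsAltPath G M P) (hPC : P ⊆ C) (hne : P.Nonempty) :
    ∃ (L : ℕ) (c : ℕ → V) (p q : ℕ), NCyc G M C L c ∧ q < L ∧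
      P = (Finset.Ico p (p+q)).image (fun k => s(c k, c (k+1))) := by
  obtain ⟨L, c, hc⟩ := exists_ZCyc hC
  obtain ⟨u, v, w, hw, hwP, -⟩ := hP
  have hlen : 0 < w.length := by
    obtain ⟨e, he⟩ := hne
    rw [← hwP, List.mem_toFinset] at he
    have := List.length_pos_of_mem he
    rwa [w.length_edges] at this
  have hwC : ∀ i < w.length, s(w.getVert i, w.getVert (i+1)) ∈ C := by
    intro i hi
    apply hPC
    rw [← hwP, List.mem_toFinset, SimpleGraph.Walk.mk_mem_edges_iff_exists]
    exact ⟨i, hi, rfl⟩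
  obtain ⟨c1, hc1, h0, h1⟩ : ∃ c1, ZCyc G M C L c1 ∧ w.getVert 0 = c1 0 ∧ w.getVert 1 = c1 1 := by
    obtain ⟨k, hk⟩ := (hc.mem _).1 (hwC 0 hlen)
    rw [Sym2.eq_iff] at hk
    rcases hk with ⟨g1, g2⟩ | ⟨g1, g2⟩
    · refine ⟨_, hc.shift k, ?_, ?_⟩
      · simp only [zero_add]; exact g1
      · rw [add_comm]; exact g2
    · refine ⟨_, (hc.shift (k+1)).neg, ?_, ?_⟩
      · simp only [neg_zero, zero_add]; exact g1
      · rw [show (-1 : ℤ) + (k + 1) = k by ring]; exact g2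
  have hall : ∀ i : ℕ, i + 1 ≤ w.length → w.getVert i = c1 i ∧ w.getVert (i+1) = c1 (i+1) := by
    intro i
    induction i with
    | zero => intro _; exact ⟨by simpa using h0, by simpa using h1⟩
    | succ i ih =>
      intro hi
      obtain ⟨g1, g2⟩ := ih (by omega)
      refine ⟨by push_cast; exact g2, ?_⟩
      obtain ⟨k, hk⟩ := (hc1.mem _).1 (hwC (i+1) (by omega))
      have hper : ∀ a b d : ℤ, c1 a = c1 b → c1 (a + d) = c1 (b + d) := by
        intro a b d hab
        obtain ⟨z, hz⟩ := hc1.inj _ _ hab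
        have mul : ∀ (k : ℤ) (n : ℕ), c1 (k + n * L) = c1 k := by
          intro k n
          induction n with
          | zero => simp
          | succ n ih =>
            rw [← ih, ← hc1.per (k + n * L)]; congr 1; push_cast; ring
        rcases Int.le_total 0 z with hz0 | hz0
        · rw [← mul (b + d) z.toNat, Int.toNat_of_nonneg hz0]
          congr 1; linarith
        · rw [← mul (a + d) (-z).toNat, Int.toNat_of_nonneg (by omega)]
          congr 1; linarith
      rw [Sym2.eq_iff] at hk
      rcases hk with ⟨k1, k2⟩ | ⟨k1, k2⟩
      · rw [k2]
        push_cast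
        apply hper
        rw [← k1, g2]
      · exfalso
        have e1 : w.getVert (i+1+1) = w.getVert i := by
          rw [g1, k2]
          have := hper (k+1) (i+1) (-1) (by rw [← k1, g2])
          rwa [show k + 1 + -1 = k by ring, show (i:ℤ) + 1 + -1 = i by ring] at this
        have := hw.getVert_injOn (show i + 1 + 1 ≤ w.length by omega)
          (show i ≤ w.length by omega) e1
        omega
  have hPiff : ∀ e, e ∈ P ↔ ∃ i < w.length, e = s(c1 i, c1 (i+1)) := by
    intro e
    rw [← hwP, List.mem_toFinset]
    constructor
    · intro he
      obtain ⟨i, hi, rfl⟩ := List.mem_iff_getElem.1 he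
      rw [w.length_edges] at hi
      refine ⟨i, hi, ?_⟩
      obtain ⟨g1, g2⟩ := hall i hi
      rw [SimpleGraph.Walk.getElem_edges, g1, g2]
    · rintro ⟨i, hi, rfl⟩
      obtain ⟨g1, g2⟩ := hall i hi
      rw [← g1, ← g2, SimpleGraph.Walk.mk_mem_edges_iff_exists]
      exact ⟨i, hi, rfl⟩
  have hqL : w.length < L := by
    by_contra hcon
    have h3 := hc1.three
    obtain ⟨g1, g2⟩ := hall (L - 1) (by omega)
    have e1 : w.getVert (L - 1 + 1) = w.getVert 0 := by
      rw [g2, h0, ← hc1.per 0]; congr 1; omega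
    have := hw.getVert_injOn (show L - 1 + 1 ≤ w.length by omega)
      (show 0 ≤ w.length by omega) e1
    omega
  by_cases hM0 : s(c1 0, c1 (0+1)) ∈ M
  · refine ⟨L, _, 0, w.length, hc1.toN hM0, hqL, ?_⟩
    ext e
    rw [hPiff]
    simp only [Finset.mem_image, Finset.mem_Ico]
    constructor
    · rintro ⟨i, hi, rfl⟩
      exact ⟨i, by omega, by push_cast; rfl⟩
    · rintro ⟨i, hi, rfl⟩
      exact ⟨i, by omega, by push_cast; rfl⟩
  · have hM1 : s(c1 (0 + -1), c1 (0 + 1 + -1)) ∈ M := by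
      have := hc1.flip (-1)
      simp only [zero_add] at this ⊢
      norm_num at this ⊢ hM0
      tauto
    refine ⟨L, _, 1, w.length, (hc1.shift (-1)).toN hM1, hqL, ?_⟩
    ext e
    rw [hPiff]
    simp only [Finset.mem_image, Finset.mem_Ico]
    constructor
    · rintro ⟨i, hi, rfl⟩
      refine ⟨i + 1, by omega, ?_⟩
      push_cast
      rw [show (i:ℤ) + 1 + -1 = i by ring, show (i:ℤ) + 1 + 1 + -1 = i + 1 by ring]
    · rintro ⟨i, hi, rfl⟩
      refine ⟨i - 1, by omega, ?_⟩
      obtain ⟨i, rfl⟩ : ∃ i', i = i' + 1 := ⟨i - 1, by omega⟩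
      push_cast
      rw [show (i:ℤ) + 1 + -1 = i by ring,
        show (i:ℤ) + 1 + 1 + -1 = i + 1 by ring]

section
variable {V : Type*} {G : SimpleGraph V} {M C : Finset (Sym2 V)} {L : ℕ} {c : ℕ → V}

theorem NCyc.einj (h : NCyc G M C L c) (x y : ℕ) (hxy : x < y)
    (he : s(c x, c (x+1)) = s(c y, c (y+1))) : x + L ≤ y := by
  have h3 := h.three
  rw [Sym2.eq_iff] at he
  rcases he with ⟨g1, g2⟩ | ⟨g1, g2⟩
  · exact h.inj x y hxy g1
  · have k1 := h.inj x (y+1) (by omega) g1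
    by_cases hx : x + 1 < y
    · have := h.inj (x+1) y hx g2
      omega
    · omega

theorem NCyc.par (h : NCyc G M C L c) (i j : ℕ) (hij : c i = c j) : Even i ↔ Even j := by
  have h1 := h.dvd i j hij
  have h2 : (2 : ℤ) ∣ L := by exact_mod_cast h.even.two_dvd
  have h3 := h2.trans h1
  rw [Nat.even_iff, Nat.even_iff]
  omega

theorem NCyc.window (h : NCyc G M C L c) (i : ℕ) (e : Sym2 V) (he : e ∈ C) :
    ∃ x, i ≤ x ∧ x < i + L ∧ e = s(c x, c (x+1)) := by
  obtain ⟨k, rfl⟩ := (h.mem e).1 he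
  have h3 := h.three
  have mul : ∀ k n : ℕ, c (k + n * L) = c k := by
    intro k n
    induction n with
    | zero => simp
    | succ n ih => rw [← ih, ← h.per (k + n * L)]; congr 1; ring
  have hle : i ≤ i * L := Nat.le_mul_of_pos_right i (by omega)
  refine ⟨i + (k + i * L - i) % L, by omega, ?_, ?_⟩
  · have := Nat.mod_lt (k + i * L - i) (show 0 < L by omega)
    omega
  · have hd := Nat.mod_add_div (k + i * L - i) L
    have e1 : k + i * L = i + (k + i * L - i) % L + ((k + i * L - i) / L) * L := by
      rw [mul_comm ((k + i * L - i) / L)]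
      omega
    have a1 : c k = c (i + (k + i * L - i) % L) := by
      rw [← mul k i]
      conv_lhs => rw [e1]
      rw [mul]
    have a2 : c (k+1) = c (i + (k + i * L - i) % L + 1) := by
      rw [← mul (k+1) i, show k + 1 + i * L = k + i * L + 1 by ring]
      conv_lhs => rw [e1]
      rw [show i + (k + i * L - i) % L + ((k + i * L - i) / L) * L + 1
        = i + (k + i * L - i) % L + 1 + ((k + i * L - i) / L) * L by ring, mul]
    rw [← a1, ← a2]

end
set_option maxHeartbeats 2000000 in
theorem mkSkip {V : Type*} [DecidableEq V] {G : SimpleGraph V} (red : Sym2 V → Bool)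
    {M C : Finset (Sym2 V)} {L : ℕ} {c : ℕ → V} (h : NCyc G M C L c) (hM : IsPM G M)
    (i j k l : ℕ) (hij : i + 3 ≤ j) (hjk : j < k) (hkl : k < l) (hl : l < i + L)
    (oi : Odd i) (ej : Even j) (ok : Odd k) (el : Even l)
    (a1 : G.Adj (c i) (c k)) (a2 : G.Adj (c j) (c l)) (d : ℤ) (hd : d = 2 ∨ d = -1)
    (w1 : ∑ x ∈ Finset.Ico i j, wt red M s(c x, c (x+1)) = d)
    (w2 : ∑ x ∈ Finset.Ico k l, wt red M s(c x, c (x+1)) = d) :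
    ∃ S : Skip G red M C, (d = 2 → S.w < 0) ∧ (d = -1 → 0 < S.w) ∧
      S.In ((Finset.Ico i l).image (fun x => s(c x, c (x+1)))) := by
  have h3 := h.three
  have mi : i % 2 = 1 := Nat.odd_iff.1 oi
  have mj : j % 2 = 0 := Nat.even_iff.1 ej
  have mk : k % 2 = 1 := Nat.odd_iff.1 ok
  have ml : l % 2 = 0 := Nat.even_iff.1 el
  have mL : L % 2 = 0 := Nat.even_iff.1 h.even
  have einj : ∀ x y, i ≤ x → x < i + L → i ≤ y → y < i + L →
      s(c x, c (x+1)) = s(c y, c (y+1)) → x = y := by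
    intro x y hx1 hx2 hy1 hy2 hxy
    rcases lt_trichotomy x y with g | g | g
    · have := h.einj x y g hxy; omega
    · exact g
    · have := h.einj y x g hxy.symm; omega
  have same : ∀ a b : ℕ, a % 2 = b % 2 → s(c a, c b) ∉ C := by
    intro a b hab hmem
    obtain ⟨x, hx⟩ := (h.mem _).1 hmem
    rw [Sym2.eq_iff] at hx
    rcases hx with ⟨g1, g2⟩ | ⟨g1, g2⟩
    · have p1 := h.par _ _ g1
      have p2 := h.par _ _ g2
      rw [Nat.even_iff, Nat.even_iff] at p1 p2
      omega
    · have p1 := h.par _ _ g1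
      have p2 := h.par _ _ g2
      rw [Nat.even_iff, Nat.even_iff] at p1 p2
      omega
  have he1C : s(c i, c k) ∉ C := same i k (by omega)
  have he2C : s(c j, c l) ∉ C := same j l (by omega)
  have he1M : s(c i, c k) ∉ M := by
    intro hm
    obtain ⟨i', rfl⟩ : ∃ i', i = i' + 1 := ⟨i - 1, by omega⟩
    have hm' : s(c i', c (i'+1)) ∈ M := (h.alt i').2 (by rw [Nat.even_iff]; omega)
    have := (hM.2 (c (i'+1))).unique ⟨hm, by simp⟩ ⟨hm', by simp⟩
    exact he1C ((h.mem _).2 ⟨i', this⟩)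
  have he2M : s(c j, c l) ∉ M := by
    intro hm
    have hm' : s(c j, c (j+1)) ∈ M := (h.alt j).2 ej
    have := (hM.2 (c j)).unique ⟨hm, by simp⟩ ⟨hm', by simp⟩
    exact he2C ((h.mem _).2 ⟨j, this⟩)
  have hne : s(c i, c k) ≠ s(c j, c l) := by
    intro hx
    rw [Sym2.eq_iff] at hx
    rcases hx with ⟨g1, g2⟩ | ⟨g1, g2⟩
    · have p1 := h.par _ _ g1
      rw [Nat.even_iff, Nat.even_iff] at p1
      omega
    · have p1 := h.par _ _ g1
      rw [Nat.even_iff, Nat.even_iff] at p1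
      omega
  set e : ℕ → Sym2 V := fun x => s(c x, c (x+1)) with he
  set D1 := (Finset.Ico i j).image e with hD1
  set D2 := (Finset.Ico k l).image e with hD2
  have hD1C : D1 ⊆ C := by
    intro f hf
    obtain ⟨x, _, rfl⟩ := Finset.mem_image.1 hf
    exact (h.mem _).2 ⟨x, rfl⟩
  have hD2C : D2 ⊆ C := by
    intro f hf
    obtain ⟨x, _, rfl⟩ := Finset.mem_image.1 hf
    exact (h.mem _).2 ⟨x, rfl⟩
  have hDC : D1 ∪ D2 ⊆ C := Finset.union_subset hD1C hD2C
  have hdisj : Disjoint D1 D2 := by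
    rw [Finset.disjoint_left]
    intro f hf hf2
    obtain ⟨x, hx, rfl⟩ := Finset.mem_image.1 hf
    obtain ⟨y, hy, hxy⟩ := Finset.mem_image.1 hf2
    rw [Finset.mem_Ico] at hx hy
    have := einj x y (by omega) (by omega) (by omega) (by omega) hxy.symm
    omega
  have hsD1 : wSum red M D1 = d := by
    rw [← w1, wSum, hD1, Finset.sum_image]
    intro x hx y hy hxy
    rw [Finset.mem_coe, Finset.mem_Ico] at hx hy
    exact einj x y (by omega) (by omega) (by omega) (by omega) hxy
  have hsD2 : wSum red M D2 = d := by
    rw [← w2, wSum, hD2, Finset.sum_image]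
    intro x hx y hy hxy
    rw [Finset.mem_coe, Finset.mem_Ico] at hx hy
    exact einj x y (by omega) (by omega) (by omega) (by omega) hxy
  have hcD1 : D1.card = j - i := by
    rw [hD1, Finset.card_image_of_injOn, Nat.card_Ico]
    intro x hx y hy hxy
    rw [Finset.mem_coe, Finset.mem_Ico] at hx hy
    exact einj x y (by omega) (by omega) (by omega) (by omega) hxy
  set C' : Finset (Sym2 V) := (C \ (D1 ∪ D2)) ∪ {s(c i, c k), s(c j, c l)} with hC'
  have hdis : Disjoint (C \ (D1 ∪ D2)) {s(c i, c k), s(c j, c l)} := by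
    rw [Finset.disjoint_right]
    intro f hf hf2
    have := (Finset.mem_sdiff.1 hf2).1
    simp only [Finset.mem_insert, Finset.mem_singleton] at hf
    rcases hf with rfl | rfl
    · exact he1C this
    · exact he2C this
  have hw : wSum red M C' - wSum red M C =
      wt red M s(c i, c k) + wt red M s(c j, c l) - d - d := by
    have e1 : wSum red M C' = wSum red M (C \ (D1 ∪ D2)) +
        (wt red M s(c i, c k) + wt red M s(c j, c l)) := by
      rw [hC', wSum, Finset.sum_union hdis, Finset.sum_pair hne]; rfl
    have e2 : wSum red M (C \ (D1 ∪ D2)) + wSum red M (D1 ∪ D2) = wSum red M C :=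
      Finset.sum_sdiff hDC
    have e3 : wSum red M (D1 ∪ D2) = wSum red M D1 + wSum red M D2 :=
      Finset.sum_union hdisj
    linarith
  have hwt : ∀ f : Sym2 V, f ∉ M → wt red M f = 0 ∨ wt red M f = 1 := by
    intro f hf
    unfold wt
    by_cases hr : red f = true <;> simp [hr, hf]
  have hcard : C'.card < C.card := by
    have g1 : C'.card ≤ (C \ (D1 ∪ D2)).card + 2 :=
      (Finset.card_union_le _ _).trans (Nat.add_le_add_left Finset.card_le_two _)
    have g2 : (C \ (D1 ∪ D2)).card + (D1 ∪ D2).card = C.card :=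
      Finset.card_sdiff_add_card_eq_card hDC
    have g3 : D1.card ≤ (D1 ∪ D2).card := Finset.card_le_card Finset.subset_union_left
    omega
  have halt : IsAltCycle G M C' := by
    set A := i + L - l with hA
    set B := k - j with hB
    set φ : ℕ → ℕ := fun x => if x ≤ A then l + x else if x ≤ A + 1 + B then k + A + 1 - x else l
      with hφ
    have f1 : ∀ x, x ≤ A → φ x = l + x := fun x hx => by simp [hφ, hx]
    have f2 : ∀ x, A < x → x ≤ A + 1 + B → φ x = k + A + 1 - x := fun x hx hx' => by
      simp [hφ, hx', Nat.not_le.2 hx]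
    have f3 : φ (A + B + 2) = l := by
      simp only [hφ]
      rw [if_neg (by omega), if_neg (by omega)]
    have hciL : c (i + L) = c i := h.per i
    have E : ∀ x, x < A + B + 2 →
        (x < A ∧ s(c (φ x), c (φ (x+1))) = e (l + x)) ∨
        (x = A ∧ s(c (φ x), c (φ (x+1))) = s(c i, c k)) ∨
        (A < x ∧ x < A + 1 + B ∧ s(c (φ x), c (φ (x+1))) = e (k + A - x)) ∨
        (x = A + 1 + B ∧ s(c (φ x), c (φ (x+1))) = s(c j, c l)) := by
      intro x hx
      rcases lt_trichotomy x A with g | g | g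
      · left
        refine ⟨g, ?_⟩
        rw [f1 x g.le, f1 (x+1) g]
        rfl
      · right; left
        refine ⟨g, ?_⟩
        rw [f1 x g.le, f2 (x+1) (by omega) (by omega), show l + x = i + L by omega, hciL,
          show k + A + 1 - (x + 1) = k by omega]
      · right; right
        by_cases g2 : x < A + 1 + B
        · left
          refine ⟨g, g2, ?_⟩
          rw [f2 x g (by omega), f2 (x+1) (by omega) (by omega)]
          simp only [he]
          rw [Sym2.eq_swap, show k + A + 1 - (x + 1) = k + A - x by omega,
            show k + A + 1 - x = k + A - x + 1 by omega]
        · right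
          refine ⟨by omega, ?_⟩
          rw [f2 x g (by omega), show x + 1 = A + B + 2 by omega, f3,
            show k + A + 1 - x = j by omega]
    have key := mkAltCycle G M (fun x => c (φ x)) (A + B + 2) (by omega)
      (by rw [Nat.even_iff]; omega)
      (by simp only [f3]; rw [f1 0 (by omega)]; rfl)
      (by
        intro x hx
        rw [← SimpleGraph.mem_edgeSet]
        rcases E x hx with ⟨_, g⟩ | ⟨_, g⟩ | ⟨_, _, g⟩ | ⟨_, g⟩
        · rw [g]; exact h.adj _
        · rw [g]; exact a1
        · rw [g]; exact h.adj _
        · rw [g]; exact a2)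
      (by
        intro x hx
        rcases E x hx with ⟨g0, g⟩ | ⟨g0, g⟩ | ⟨g0, g0', g⟩ | ⟨g0, g⟩
        · rw [g, h.alt, Nat.even_iff, Nat.even_iff]; omega
        · rw [g, Nat.even_iff]
          exact ⟨fun hh => absurd hh he1M, fun hh => by omega⟩
        · rw [g, h.alt, Nat.even_iff, Nat.even_iff]; omega
        · rw [g, Nat.even_iff]
          exact ⟨fun hh => absurd hh he2M, fun hh => by omega⟩)
      (by
        intro x y hx hy hxy
        have bd : ∀ z, z < A + B + 2 → (z ≤ A ∧ φ z = l + z) ∨ (A < z ∧ φ z = k + A + 1 - z) := by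
          intro z hz
          by_cases g : z ≤ A
          · exact Or.inl ⟨g, f1 z g⟩
          · exact Or.inr ⟨by omega, f2 z (by omega) (by omega)⟩
        have bx := bd x hx
        have bY := bd y hy
        rcases lt_trichotomy (φ x) (φ y) with g | g | g
        · have := h.inj _ _ g hxy
          omega
        · omega
        · have := h.inj _ _ g hxy.symm
          omega)
    convert key using 1
    ext f
    simp only [hC', Finset.mem_union, Finset.mem_sdiff, Finset.mem_insert, Finset.mem_singleton,
      Finset.mem_image, Finset.mem_range]
    constructor
    · rintro (⟨hf, hnf⟩ | rfl | rfl)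
      · obtain ⟨x, hx1, hx2, rfl⟩ := h.window i f hf
        push Not at hnf
        have n1 : ¬ x < j := fun hx => hnf.1 (Finset.mem_image.2
          ⟨x, Finset.mem_Ico.2 ⟨hx1, hx⟩, rfl⟩)
        have n2 : ¬ (k ≤ x ∧ x < l) := fun hx => hnf.2 (Finset.mem_image.2
          ⟨x, Finset.mem_Ico.2 hx, rfl⟩)
        by_cases hxl : l ≤ x
        · refine ⟨x - l, by omega, ?_⟩
          rcases E (x - l) (by omega) with ⟨g0, g⟩ | ⟨g0, g⟩ | ⟨g0, g0', g⟩ | ⟨g0, g⟩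
          · rw [g, show l + (x - l) = x by omega]
          all_goals omega
        · refine ⟨k + A - x, by omega, ?_⟩
          rcases E (k + A - x) (by omega) with ⟨g0, g⟩ | ⟨g0, g⟩ | ⟨g0, g0', g⟩ | ⟨g0, g⟩
          · omega
          · omega
          · rw [g, show k + A - (k + A - x) = x by omega]
          · omega
      · refine ⟨A, by omega, ?_⟩
        rcases E A (by omega) with ⟨g0, g⟩ | ⟨g0, g⟩ | ⟨g0, g0', g⟩ | ⟨g0, g⟩
        · omega
        · exact g
        · omega
        · omega
      · refine ⟨A + 1 + B, by omega, ?_⟩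
        rcases E (A + 1 + B) (by omega) with ⟨g0, g⟩ | ⟨g0, g⟩ | ⟨g0, g0', g⟩ | ⟨g0, g⟩
        · omega
        · omega
        · omega
        · exact g
    · rintro ⟨x, hx, rfl⟩
      have out : ∀ y, (j ≤ y ∧ y < k) ∨ (l ≤ y ∧ y < i + L) →
          e y ∈ C ∧ ¬ (e y ∈ D1 ∨ e y ∈ D2) := by
        intro y hy
        refine ⟨(h.mem _).2 ⟨y, rfl⟩, ?_⟩
        rintro (g | g)
        · obtain ⟨z, hz, hzy⟩ := Finset.mem_image.1 g
          rw [Finset.mem_Ico] at hz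
          have := einj z y (by omega) (by omega) (by omega) (by omega) hzy
          omega
        · obtain ⟨z, hz, hzy⟩ := Finset.mem_image.1 g
          rw [Finset.mem_Ico] at hz
          have := einj z y (by omega) (by omega) (by omega) (by omega) hzy
          omega
      rcases E x hx with ⟨g0, g⟩ | ⟨g0, g⟩ | ⟨g0, g0', g⟩ | ⟨g0, g⟩
      · left; rw [g]; exact out _ (by omega)
      · right; left; exact g
      · left; rw [g]; exact out _ (by omega)
      · right; right; exact g
  have t1 := hwt _ he1M
  have t2 := hwt _ he2M
  refine ⟨⟨s(c i, c k), s(c j, c l), C', hne, a1, a2, he1M, he2M, he1C, he2C, halt, ?_, ?_, ?_,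
    hcard, ?_⟩, ?_, ?_, ?_⟩
  · simp [hC']
  · simp [hC']
  · intro f hf
    simp only [hC', Finset.mem_sdiff, Finset.mem_union] at hf
    tauto
  · rw [hw, abs_le]
    omega
  · intro h2
    simp only [Skip.w]
    omega
  · intro h2
    simp only [Skip.w]
    omega
  · intro f hf
    simp only [hC', Finset.mem_sdiff, Finset.mem_union] at hf
    have : f ∈ D1 ∨ f ∈ D2 := by tauto
    rcases this with g | g
    · obtain ⟨z, hz, rfl⟩ := Finset.mem_image.1 g
      rw [Finset.mem_Ico] at hz
      exact Finset.mem_image.2 ⟨z, Finset.mem_Ico.2 (by omega), rfl⟩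
    · obtain ⟨z, hz, rfl⟩ := Finset.mem_image.1 g
      rw [Finset.mem_Ico] at hz
      exact Finset.mem_image.2 ⟨z, Finset.mem_Ico.2 (by omega), rfl⟩

theorem final_aux {V : Type*} [Fintype V] [DecidableEq V] {G : SimpleGraph V}
    (red : Sym2 V → Bool) (t : ℕ)
    {M C : Finset (Sym2 V)} {L : ℕ} {c : ℕ → V} (h : NCyc G M C L c) (hM : IsPM G M)
    (p q N : ℕ) (hq : q < L) (d : ℤ) (hd : d = 2 ∨ d = -1)
    (hN : t * (4 ^ indepNum G - 1) ≤ N) (x y : ℕ → ℕ)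
    (hx : ∀ m < N, p ≤ x m ∧ x m < y m ∧ y m ≤ p + q ∧ Odd (x m) ∧ Even (y m) ∧
      ∑ z ∈ Finset.Ico (x m) (y m), wt red M s(c z, c (z+1)) = d)
    (hxy : ∀ m m', m < m' → m' < N → y m < x m') :
    ∃ S : Fin t → Skip G red M C,
      (∀ i, (d = 2 → (S i).w < 0) ∧ (d = -1 → 0 < (S i).w) ∧
        (S i).In ((Finset.Ico p (p+q)).image (fun k => s(c k, c (k+1))))) ∧
      ∀ i j, i ≠ j → Skip.Disj (S i) (S j) := by
  have hα : 1 ≤ indepNum G := by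
    have := indep_card_le G {c 0} (by simp)
    simpa using this
  have h4 : 4 ≤ 4 ^ indepNum G := by
    calc 4 = 4 ^ 1 := by norm_num
      _ ≤ _ := Nat.pow_le_pow_right (by norm_num) hα
  set R := 4 ^ indepNum G - 1 with hR
  have cinj : ∀ a b, p ≤ a → a ≤ p + q → p ≤ b → b ≤ p + q → c a = c b → a = b := by
    intro a b ha1 ha2 hb1 hb2 hab
    rcases lt_trichotomy a b with g | g | g
    · have := h.inj a b g hab; omega
    · exact g
    · have := h.inj b a g hab.symm; omega
  have einj : ∀ a b, p ≤ a → a < p + q → p ≤ b → b < p + q →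
      s(c a, c (a+1)) = s(c b, c (b+1)) → a = b := by
    intro a b ha1 ha2 hb1 hb2 hab
    rcases lt_trichotomy a b with g | g | g
    · have := h.einj a b g hab; omega
    · exact g
    · have := h.einj b a g hab.symm; omega
  have len3 : ∀ m < N, x m + 3 ≤ y m := by
    intro m hm
    obtain ⟨g1, g2, g3, g4, g5, g6⟩ := hx m hm
    have o1 := Nat.odd_iff.1 g4
    have o2 := Nat.even_iff.1 g5
    by_contra hcon
    have hy : y m = x m + 1 := by omega
    rw [hy, Nat.Ico_succ_singleton, Finset.sum_singleton] at g6
    have hnM : s(c (x m), c (x m + 1)) ∉ M := by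
      rw [h.alt, Nat.even_iff]; omega
    unfold wt at g6
    by_cases hr : red s(c (x m), c (x m + 1)) = true <;> simp [hr, hnM] at g6 <;> omega
  have grp : ∀ g : Fin t, ∃ s u : ℕ, g * R ≤ s ∧ s < u ∧ u < (g+1) * R ∧ u < N ∧
      G.Adj (c (x s)) (c (x u)) ∧ G.Adj (c (y s)) (c (y u)) := by
    intro g
    have hgN : (g + 1) * R ≤ N := le_trans (Nat.mul_le_mul_right R g.2) hN
    have xin : Set.InjOn (fun m => c (x m)) (Finset.Ico (g * R) ((g+1) * R) : Finset ℕ) := by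
      intro a ha b hb hab
      rw [Finset.mem_coe, Finset.mem_Ico] at ha hb
      obtain ⟨ga1, ga2, ga3, _⟩ := hx a (by omega)
      obtain ⟨gb1, gb2, gb3, _⟩ := hx b (by omega)
      have := cinj (x a) (x b) (by omega) (by omega) (by omega) (by omega) hab
      rcases lt_trichotomy a b with k | k | k
      · have := hxy a b k (by omega); omega
      · exact k
      · have := hxy b a k (by omega); omega
    have yin : Set.InjOn (fun m => c (y m)) (Finset.Ico (g * R) ((g+1) * R) : Finset ℕ) := by
      intro a ha b hb hab
      rw [Finset.mem_coe, Finset.mem_Ico] at ha hb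
      obtain ⟨ga1, ga2, ga3, _⟩ := hx a (by omega)
      obtain ⟨gb1, gb2, gb3, _⟩ := hx b (by omega)
      have := cinj (y a) (y b) (by omega) (by omega) (by omega) (by omega) hab
      rcases lt_trichotomy a b with k | k | k
      · have := hxy a b k (by omega); omega
      · exact k
      · have := hxy b a k (by omega); omega
    obtain ⟨s, hs, u, hu, hsu, b1, b2⟩ := pair_adj G (fun m => c (x m)) (fun m => c (y m)) _
      xin yin hα (by rw [Nat.card_Ico, ← Nat.sub_mul]; simp only [Nat.add_sub_cancel_left]; omega)
    rw [Finset.mem_Ico] at hs hu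
    exact ⟨s, u, hs.1, hsu, hu.2, by omega, b1, b2⟩
  choose s u hs hsu hu huN b1 b2 using grp
  have sk : ∀ g : Fin t, ∃ S : Skip G red M C, (d = 2 → S.w < 0) ∧ (d = -1 → 0 < S.w) ∧
      S.In ((Finset.Ico (x (s g)) (y (u g))).image (fun z => s(c z, c (z+1)))) := by
    intro g
    obtain ⟨ga1, ga2, ga3, ga4, ga5, ga6⟩ := hx (s g) ((hsu g).trans (huN g))
    obtain ⟨gb1, gb2, gb3, gb4, gb5, gb6⟩ := hx (u g) (huN g)
    exact mkSkip red h hM (x (s g)) (y (s g)) (x (u g)) (y (u g))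
      (len3 _ ((hsu g).trans (huN g))) (hxy _ _ (hsu g) (huN g)) gb2 (by omega)
      ga4 ga5 gb4 gb5 (b1 g) (b2 g) d hd ga6 gb6
  choose S hS1 hS2 hS3 using sk
  have bd : ∀ g, p ≤ x (s g) ∧ x (s g) ≤ y (u g) ∧ y (u g) ≤ p + q := by
    intro g
    obtain ⟨ga1, ga2, ga3, ga4, ga5, ga6⟩ := hx (s g) ((hsu g).trans (huN g))
    obtain ⟨gb1, gb2, gb3, gb4, gb5, gb6⟩ := hx (u g) (huN g)
    have := hxy _ _ (hsu g) (huN g)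
    omega
  refine ⟨S, fun g => ⟨hS1 g, hS2 g, ?_⟩, ?_⟩
  · refine (hS3 g).trans (Finset.image_subset_image (Finset.Ico_subset_Ico ?_ ?_))
    · exact (bd g).1
    · exact (bd g).2.2
  · intro g g' hgg
    refine ⟨_, _, ?_, ?_, ?_, ?_, ?_, hS3 g, hS3 g'⟩
    · intro f hf
      obtain ⟨z, _, rfl⟩ := Finset.mem_image.1 hf
      exact (h.mem _).2 ⟨z, rfl⟩
    · intro f hf
      obtain ⟨z, _, rfl⟩ := Finset.mem_image.1 hf
      exact (h.mem _).2 ⟨z, rfl⟩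
    · rw [Finset.disjoint_left]
      intro f hf hf2
      obtain ⟨z, hz, rfl⟩ := Finset.mem_image.1 hf
      obtain ⟨z', hz', hzz⟩ := Finset.mem_image.1 hf2
      rw [Finset.mem_Ico] at hz hz'
      have B1 := bd g
      have B2 := bd g'
      have := einj z z' (by omega) (by omega) (by omega) (by omega) hzz.symm
      subst this
      have ord : ∀ g g' : Fin t, g < g' → y (u g) < x (s g') := by
        intro g g' hlt
        apply hxy _ _ _ ((hsu g').trans (huN g'))
        have m1 : (g + 1) * R ≤ g' * R := Nat.mul_le_mul_right R hlt
        have := hu g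
        have := hs g'
        omega
      rcases lt_or_gt_of_ne hgg with k | k
      · have := ord g g' k; omega
      · have := ord g' g k; omega
    · have B1 := bd g
      exact mkAltPath G M c _ _ B1.2.1 h.adj h.alt
        (fun a b _ _ _ _ hab => cinj a b (by omega) (by omega) (by omega) (by omega) hab)
    · have B1 := bd g'
      exact mkAltPath G M c _ _ B1.2.1 h.adj h.alt
        (fun a b _ _ _ _ hab => cinj a b (by omega) (by omega) (by omega) (by omega) hab)

/-- Big-weight paths contain many disjoint skips: if `P ⊆ C` is an `M`-alternating path on
an `M`-alternating cycle `C` with `w_M(P) ≥ 2t·4^α`, then `P` contains at least `t`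
pairwise disjoint negative skips; symmetrically, if `w_M(P) ≤ −2t·4^α` then `P` contains
at least `t` pairwise disjoint positive skips. -/
theorem big_weight_path_has_skips
    {V : Type*} [Fintype V] [DecidableEq V] (G : SimpleGraph V) (red : Sym2 V → Bool)
    (t : ℕ) (ht : 1 ≤ t) (M : Finset (Sym2 V)) (hM : IsPM G M)
    (C : Finset (Sym2 V)) (hC : IsAltCycle G M C)
    (P : Finset (Sym2 V)) (hPC : P ⊆ C) (hP : IsAltPath G M P) :
    ((2 * t * 4 ^ indepNum G : ℤ) ≤ wSum red M P →
      ∃ S : Fin t → Skip G red M C,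
        (∀ i, (S i).w < 0 ∧ (S i).In P) ∧
        ∀ i j, i ≠ j → Skip.Disj (S i) (S j)) ∧
    (wSum red M P ≤ -(2 * t * 4 ^ indepNum G : ℤ) →
      ∃ S : Fin t → Skip G red M C,
        (∀ i, 0 < (S i).w ∧ (S i).In P) ∧
        ∀ i j, i ≠ j → Skip.Disj (S i) (S j)) := by
  by_cases hne : P.Nonempty
  swap
  · rw [Finset.not_nonempty_iff_eq_empty] at hne
    subst hne
    have hpos : (0 : ℤ) < 2 * t * 4 ^ indepNum G := by positivity
    have h0 : wSum red M (∅ : Finset (Sym2 V)) = 0 := by simp [wSum]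
    rw [h0]
    exact ⟨fun h => by omega, fun h => by omega⟩
  obtain ⟨L, c, p, q, h, hq, rfl⟩ := exists_aligned hC hP hPC hne
  set F : ℕ → ℤ := fun k => ∑ z ∈ Finset.range k, wt red M s(c z, c (z+1)) with hF
  have hFs : ∀ k, F (k+1) = F k + wt red M s(c k, c (k+1)) := fun k => by
    simp only [hF]; rw [Finset.sum_range_succ]
  have he : ∀ k, Even k → F (k+1) = F k ∨ F (k+1) = F k - 1 := by
    intro k hk
    have hm := (h.alt k).2 hk
    rw [hFs]
    unfold wt
    by_cases hr : red s(c k, c (k+1)) = true <;> simp [hr, hm]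
    omega
  have ho : ∀ k, Odd k → F (k+1) = F k ∨ F (k+1) = F k + 1 := by
    intro k hk
    have hm : s(c k, c (k+1)) ∉ M := fun hh => (Nat.not_even_iff_odd.2 hk) ((h.alt k).1 hh)
    rw [hFs]
    unfold wt
    by_cases hr : red s(c k, c (k+1)) = true <;> simp [hr, hm]
  have hIco : ∀ a b, a ≤ b → ∑ z ∈ Finset.Ico a b, wt red M s(c z, c (z+1)) = F b - F a :=
    fun a b hab => Finset.sum_Ico_eq_sub _ hab
  have hsum : wSum red M ((Finset.Ico p (p+q)).image (fun k => s(c k, c (k+1)))) =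
      F (p+q) - F p := by
    rw [← hIco p (p+q) (by omega), wSum, Finset.sum_image]
    intro a ha b hb hab
    rw [Finset.mem_coe, Finset.mem_Ico] at ha hb
    rcases lt_trichotomy a b with g | g | g
    · have := h.einj a b g hab; omega
    · exact g
    · have := h.einj b a g hab.symm; omega
  rw [hsum]
  have h4 : 1 ≤ 4 ^ indepNum G := Nat.one_le_pow _ _ (by norm_num)
  have hcast : ((4 ^ indepNum G : ℕ) : ℤ) = 4 ^ indepNum G := by push_cast; rfl
  rw [← hcast]
  generalize hR : 4 ^ indepNum G = R at *
  have hmul : t * (R - 1) + t = t * R := by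
    obtain ⟨R', rfl⟩ : ∃ R', R = R' + 1 := ⟨R - 1, by omega⟩
    rw [Nat.add_sub_cancel]; ring
  have hmulz : (2 * t * R : ℤ) = 2 * ((t * R : ℕ) : ℤ) := by push_cast; ring
  rw [hmulz]
  constructor
  · intro hw
    obtain ⟨x, y, h1, h2⟩ := segs_iter (p+q) (fun k => F (p+q) - F k) (fun a b => F b = F a + 2)
      (by
        intro k hk hB
        obtain ⟨x, y, g1, g2, g3, g4, g5, g6, g7⟩ := step_pos F he ho (p+q) k hk (by omega)
        exact ⟨x, y, g1, g2, g3, g4, g5, g6, by omega⟩)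
      (t * R) p (by omega) hw
    obtain ⟨S, hS1, hS2⟩ := final_aux red t h hM p q (t * R) hq 2 (Or.inl rfl)
      (by rw [hR]; omega) x y
      (by
        intro m hm
        obtain ⟨g1, g2, g3, g4, g5, g6⟩ := h1 m hm
        exact ⟨g1, g2, g3, g4, g5, by rw [hIco _ _ g2.le]; omega⟩) h2
    exact ⟨S, fun i => ⟨(hS1 i).1 rfl, (hS1 i).2.2⟩, hS2⟩
  · intro hw
    have hRt : 1 ≤ t * R := Nat.mul_pos ht h4
    have hq0 : 0 < q := by
      by_contra hcon
      have : q = 0 := by omega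
      subst this
      simp only [add_zero] at hw
      omega
    obtain ⟨r, hr, hre, hpr, hFr⟩ : ∃ r, r ≤ p + q ∧ Even r ∧ p ≤ r ∧ F r ≤ F (p+q) + 1 := by
      rcases Nat.even_or_odd (p+q) with g | g
      · exact ⟨p+q, le_rfl, g, by omega, by omega⟩
      · have ge : Even (p + q - 1) := by
          rw [Nat.even_iff]; rw [Nat.odd_iff] at g; omega
        refine ⟨p + q - 1, by omega, ge, by omega, ?_⟩
        have := he _ ge
        rw [show p + q - 1 + 1 = p + q by omega] at this
        omega
    obtain ⟨x, y, h1, h2⟩ := segs_iter r (fun k => F k - F r) (fun a b => F b = F a - 1)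
      (by
        intro k hk hB
        obtain ⟨x, y, g1, g2, g3, g4, g5, g6, g7⟩ := step_neg F he ho r k hre hk (by omega)
        exact ⟨x, y, g1, g2, g3, g4, g5, g6, by omega⟩)
      (t * R - 1) p hpr (by omega)
    obtain ⟨S, hS1, hS2⟩ := final_aux red t h hM p q (t * R - 1) hq (-1) (Or.inr rfl)
      (by rw [hR]; omega) x y
      (by
        intro m hm
        obtain ⟨g1, g2, g3, g4, g5, g6⟩ := h1 m hm
        exact ⟨g1, g2, g3.trans hr, g4, g5, by rw [hIco _ _ g2.le]; omega⟩) h2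
    exact ⟨S, fun i => ⟨(hS1 i).2.1 rfl, (hS1 i).2.2⟩, hS2⟩
end

section
/- Let G be a graph with independence number α = α(G), let t ≥ 8·4^α be an integer and t' = 4t². Let M be a perfect matching of G and 𝒞 a set of vertex-disjoint M-alternating cycles containing a cycle C ∈ 𝒞 such that |w_M(𝒞)| ≤ t' and |w_M(C)| ≥ 2t'. Then 𝒞 contains a 0-skip-cycle set. -/
open Finset

/-! ### Auxiliary material -/

theorem aux_ramsey (r : ℕ → ℕ → Prop) (hr : ∀ a b, r a b → r b a) :
    ∀ n s t : ℕ, s + t = n → ∀ A : Finset ℕ, 2 ^ n ≤ A.card →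
      (∃ B ⊆ A, B.card = s + 1 ∧ ∀ a ∈ B, ∀ b ∈ B, a ≠ b → r a b) ∨
      (∃ B ⊆ A, B.card = t + 1 ∧ ∀ a ∈ B, ∀ b ∈ B, a ≠ b → ¬ r a b) := by
  classical
  intro n
  induction n with
  | zero =>
    intro s t hst A hA
    have : A.Nonempty := by rw [← Finset.card_pos]; simpa using hA
    obtain ⟨v, hv⟩ := this
    left
    refine ⟨{v}, by simpa using hv, by simp; omega, ?_⟩
    intro a ha b hb hab
    simp at ha hb
    exact absurd (ha.trans hb.symm) hab
  | succ n ih =>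
    intro s t hst A hA
    have : A.Nonempty := by
      rw [← Finset.card_pos]; exact lt_of_lt_of_le (by positivity) hA
    obtain ⟨v, hv⟩ := this
    have single : ∀ q : ℕ → ℕ → Prop, ∃ B ⊆ A, B.card = 0 + 1 ∧
        ∀ a ∈ B, ∀ b ∈ B, a ≠ b → q a b := by
      intro q
      refine ⟨{v}, by simpa using hv, by simp, ?_⟩
      intro a ha b hb hab
      simp at ha hb
      exact absurd (ha.trans hb.symm) hab
    rcases s with _ | s
    · left; exact single _
    rcases t with _ | t
    · right; exact single _
    have hsum : ((A.erase v).filter (fun b => r v b)).card +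
        ((A.erase v).filter (fun b => ¬ r v b)).card = (A.erase v).card :=
      Finset.card_filter_add_card_filter_not _
    rw [Finset.card_erase_of_mem hv] at hsum
    have hpow : 2 ^ (n+1) = 2 * 2 ^ n := by ring
    by_cases hc : 2 ^ n ≤ ((A.erase v).filter (fun b => r v b)).card
    · rcases ih s (t+1) (by omega) _ hc with ⟨B, hBA, hcard, hB⟩ | ⟨B, hBA, hcard, hB⟩
      · left
        have hvB : v ∉ B := fun h => by
          have := hBA h
          simp at this
        refine ⟨insert v B, ?_, by rw [Finset.card_insert_of_notMem hvB, hcard], ?_⟩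
        · intro a ha
          rcases Finset.mem_insert.1 ha with rfl | ha
          · exact hv
          · exact Finset.mem_of_mem_erase (Finset.mem_filter.1 (hBA ha)).1
        · intro a ha b hb hab
          rcases Finset.mem_insert.1 ha with rfl | ha'
          · rcases Finset.mem_insert.1 hb with rfl | hb
            · exact absurd rfl hab
            · exact (Finset.mem_filter.1 (hBA hb)).2
          · rcases Finset.mem_insert.1 hb with rfl | hb
            · exact hr _ _ (Finset.mem_filter.1 (hBA ha')).2
            · exact hB a ha' b hb hab
      · right
        exact ⟨B, fun a ha => Finset.mem_of_mem_erase (Finset.mem_filter.1 (hBA ha)).1, hcard, hB⟩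
    · have hc' : 2 ^ n ≤ ((A.erase v).filter (fun b => ¬ r v b)).card := by omega
      rcases ih (s+1) t (by omega) _ hc' with ⟨B, hBA, hcard, hB⟩ | ⟨B, hBA, hcard, hB⟩
      · left
        exact ⟨B, fun a ha => Finset.mem_of_mem_erase (Finset.mem_filter.1 (hBA ha)).1, hcard, hB⟩
      · right
        have hvB : v ∉ B := fun h => by
          have := hBA h
          simp at this
        refine ⟨insert v B, ?_, by rw [Finset.card_insert_of_notMem hvB, hcard], ?_⟩
        · intro a ha
          rcases Finset.mem_insert.1 ha with rfl | ha
          · exact hv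
          · exact Finset.mem_of_mem_erase (Finset.mem_filter.1 (hBA ha)).1
        · intro a ha b hb hab
          rcases Finset.mem_insert.1 ha with rfl | ha'
          · rcases Finset.mem_insert.1 hb with rfl | hb
            · exact absurd rfl hab
            · exact (Finset.mem_filter.1 (hBA hb)).2
          · rcases Finset.mem_insert.1 hb with rfl | hb
            · exact fun h => (Finset.mem_filter.1 (hBA ha')).2 (hr _ _ h)
            · exact hB a ha' b hb hab

theorem aux_indep {V : Type*} [Fintype V] (G : SimpleGraph V) (s : Finset V)
    (hs : ∀ a ∈ s, ∀ b ∈ s, a ≠ b → ¬ G.Adj a b) : s.card ≤ indepNum G := by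
  apply le_csSup
  · refine ⟨Fintype.card V, ?_⟩
    rintro n ⟨s, rfl, -⟩
    exact Finset.card_le_univ s
  · exact ⟨s, rfl, fun a ha b hb hab => hs a ha b hb hab⟩

/-- one greedy step, positive case; `P` are the prefix sums -/
theorem aux_step_pos (P : ℕ → ℤ) (he : ∀ n, P (2*n+1) = P (2*n) ∨ P (2*n+1) = P (2*n) + 1)
    (ho : ∀ n, P (2*n+2) = P (2*n+1) ∨ P (2*n+2) = P (2*n+1) - 1)
    (k c : ℕ) (hck : c ≤ k) (h : 2 ≤ P (2*k) - P (2*c)) :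
    ∃ j, c < j ∧ j < k ∧ P (2*j+1) - P (2*c) = 2 ∧ P (2*(j+1)) - P (2*c) ≤ 2 := by
  classical
  have hk : c < k := by
    rcases Nat.lt_or_ge c k with h' | h'
    · exact h'
    · have : c = k := by omega
      subst this; omega
  have hex : ∃ n, c ≤ n ∧ 2 ≤ P (2*n+1) - P (2*c) := by
    refine ⟨k-1, by omega, ?_⟩
    have := ho (k-1)
    rw [show 2*(k-1)+2 = 2*k by omega] at this
    omega
  have hmin : ∀ m, m < Nat.find hex → ¬ (c ≤ m ∧ 2 ≤ P (2*m+1) - P (2*c)) :=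
    fun m hm => Nat.find_min hex hm
  have hle : Nat.find hex ≤ k - 1 := by
    apply Nat.find_le
    refine ⟨by omega, ?_⟩
    have := ho (k-1)
    rw [show 2*(k-1)+2 = 2*k by omega] at this
    omega
  obtain ⟨h1, h2⟩ := Nat.find_spec hex
  generalize Nat.find hex = j at *
  have hj : c < j := by
    rcases Nat.lt_or_ge c j with h' | h'
    · exact h'
    · have : c = j := by omega
      subst this
      have := he c
      omega
  have h3 := hmin (j-1) (by omega)
  have h4 : P (2*(j-1)+1) - P (2*c) < 2 := by
    by_contra h5
    exact h3 ⟨by omega, by omega⟩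
  have h5 := ho (j-1)
  rw [show 2*(j-1)+2 = 2*j by omega] at h5
  have h6 := he j
  have h7 := ho j
  refine ⟨j, hj, by omega, by omega, ?_⟩
  rw [show 2*(j+1) = 2*j+2 by ring]
  omega

theorem aux_step_neg (P : ℕ → ℤ) (he : ∀ n, P (2*n+1) = P (2*n) ∨ P (2*n+1) = P (2*n) + 1)
    (ho : ∀ n, P (2*n+2) = P (2*n+1) ∨ P (2*n+2) = P (2*n+1) - 1)
    (k c : ℕ) (hck : c ≤ k) (h : P (2*k) - P (2*c) ≤ -2) :
    ∃ j, c < j ∧ j < k ∧ P (2*j+1) - P (2*c) = -1 ∧ -2 ≤ P (2*(j+1)) - P (2*c) := by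
  classical
  have hk : c < k := by
    rcases Nat.lt_or_ge c k with h' | h'
    · exact h'
    · have : c = k := by omega
      subst this; omega
  have hw : c ≤ k-1 ∧ P (2*(k-1)+1) - P (2*c) ≤ -1 := by
    refine ⟨by omega, ?_⟩
    have := ho (k-1)
    rw [show 2*(k-1)+2 = 2*k by omega] at this
    omega
  have hex : ∃ n, c ≤ n ∧ P (2*n+1) - P (2*c) ≤ -1 := ⟨k-1, hw⟩
  have hmin : ∀ m, m < Nat.find hex → ¬ (c ≤ m ∧ P (2*m+1) - P (2*c) ≤ -1) :=
    fun m hm => Nat.find_min hex hm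
  have hle : Nat.find hex ≤ k - 1 := Nat.find_le hw
  obtain ⟨h1, h2⟩ := Nat.find_spec hex
  generalize Nat.find hex = j at *
  have hj : c < j := by
    rcases Nat.lt_or_ge c j with h' | h'
    · exact h'
    · have : c = j := by omega
      subst this
      have := he c
      omega
  have h3 := hmin (j-1) (by omega)
  have h4 : -1 < P (2*(j-1)+1) - P (2*c) := by
    by_contra h5
    exact h3 ⟨by omega, by omega⟩
  have h5 := ho (j-1)
  rw [show 2*(j-1)+2 = 2*j by omega] at h5
  have h6 := he j
  have h7 := ho j
  refine ⟨j, hj, by omega, by omega, ?_⟩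
  rw [show 2*(j+1) = 2*j+2 by ring]
  omega

/-- many disjoint segments `[2 * i n, 2 * j n + 1)` of weight `τ` -/
theorem aux_segments (P : ℕ → ℤ) (k : ℕ) (σ τ : ℤ)
    (hstep : ∀ c ≤ k, 2 ≤ σ * (P (2*k) - P (2*c)) →
      ∃ j, c < j ∧ j < k ∧ P (2*j+1) - P (2*c) = τ ∧ σ * (P (2*(j+1)) - P (2*c)) ≤ 2) :
    ∀ N c : ℕ, c ≤ k → 2 * (N : ℤ) ≤ σ * (P (2*k) - P (2*c)) →
      ∃ i j : ℕ → ℕ, (∀ n < N, c ≤ i n ∧ i n < j n ∧ j n < k ∧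
        P (2 * j n + 1) - P (2 * i n) = τ) ∧ ∀ m n, m < n → n < N → j m < i n := by
  intro N
  induction N with
  | zero => 
    intro c _ _
    exact ⟨id, id, by simp, by simp⟩
  | succ N ih =>
    intro c hc h
    push_cast at h
    obtain ⟨j0, h1, h2, h3, h4⟩ := hstep c hc (by omega)
    obtain ⟨i, j, hij, hmono⟩ := ih (j0+1) (by omega) (by
      have : σ * (P (2*k) - P (2*(j0+1))) = σ * (P (2*k) - P (2*c)) - σ * (P (2*(j0+1)) - P (2*c)) := by
        ring
      omega)
    refine ⟨fun n => Nat.casesOn n c i, fun n => Nat.casesOn n j0 j, ?_, ?_⟩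
    · intro n hn
      rcases n with _ | n
      · exact ⟨le_rfl, h1, h2, h3⟩
      · obtain ⟨a1, a2, a3, a4⟩ := hij n (by omega)
        exact ⟨by show c ≤ i n; omega, a2, a3, a4⟩
    · intro m n hmn hn
      rcases n with _ | n
      · omega
      · have := (hij n (by omega)).1
        rcases m with _ | m
        · show j0 < i n
          omega
        · exact hmono m n (by omega) (by omega)

/-- walk along a sequence of vertices -/
theorem aux_walk {V : Type*} (G : SimpleGraph V) (y : ℕ → V) (n : ℕ) (c : ℕ)
    (h : ∀ m < n, G.Adj (y (c + m)) (y (c + m + 1))) :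
    ∃ p : G.Walk (y c) (y (c + n)),
      p.edges = (List.range n).map (fun m => s(y (c + m), y (c + m + 1))) ∧
      p.support = (List.range (n+1)).map (fun m => y (c + m)) := by
  induction n with
  | zero => exact ⟨SimpleGraph.Walk.nil, by simp, by simp⟩
  | succ n ih =>
    obtain ⟨p, hp1, hp2⟩ := ih (fun m hm => h m (by omega))
    refine ⟨p.concat (h n (by omega)), ?_, ?_⟩
    · rw [SimpleGraph.Walk.edges_concat, hp1, List.range_succ, List.map_append]
      simp [← add_assoc]
    · rw [SimpleGraph.Walk.support_concat, hp2, List.range_succ (n := n+1), List.map_append]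
      simp

theorem aux_nodup {V : Type*} (y : ℕ → V) (n c : ℕ)
    (hinj : ∀ a b, c ≤ a → a < b → b < c + n → y a ≠ y b) :
    ((List.range n).map (fun m => y (c + m))).Nodup := by
  rw [List.nodup_map_iff_inj_on List.nodup_range]
  intro a ha b hb hab
  simp at ha hb
  rcases lt_trichotomy a b with h | h | h
  · exact absurd hab (hinj _ _ (by omega) (by omega) (by omega))
  · exact h
  · exact absurd hab.symm (hinj _ _ (by omega) (by omega) (by omega))

theorem aux_path {V : Type*} [DecidableEq V] (G : SimpleGraph V) (M : Finset (Sym2 V)) (y : ℕ → V)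
    (n : ℕ) (c : ℕ)
    (h : ∀ m, G.Adj (y m) (y (m + 1)))
    (hinj : ∀ a b, c ≤ a → a < b → b ≤ c + n → y a ≠ y b)
    (halt : ∀ i, s(y i, y (i+1)) ∈ M ↔ Odd i) :
    IsAltPath G M ((Finset.Ico c (c+n)).image (fun i => s(y i, y (i+1)))) := by
  obtain ⟨p, hp1, hp2⟩ := aux_walk G y n c (fun m _ => h _)
  refine ⟨_, _, p, ?_, ?_, ?_⟩
  · rw [SimpleGraph.Walk.isPath_def, hp2]
    exact aux_nodup y _ c (fun a b h1 h2 h3 => hinj a b h1 h2 (by omega))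
  · rw [hp1]
    ext e
    simp only [List.mem_toFinset, List.mem_map, List.mem_range, Finset.mem_image, Finset.mem_Ico]
    constructor
    · rintro ⟨m, hm, rfl⟩
      exact ⟨c+m, by omega, rfl⟩
    · rintro ⟨m, hm, rfl⟩
      exact ⟨m-c, by omega, by rw [show c + (m-c) = m by omega]⟩
  · show List.IsChain _ _
    rw [hp1, List.isChain_iff_getElem]
    intro i hi
    simp only [List.getElem_map, List.getElem_range, halt]
    rw [show c + (i+1) = c + i + 1 by ring, Nat.odd_add_one]
    tauto

theorem aux_cycle {V : Type*} [DecidableEq V] (G : SimpleGraph V) (M : Finset (Sym2 V)) (y : ℕ → V)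
    (L : ℕ) (hL : 3 ≤ L) (hLe : Even L) (h0 : y L = y 0)
    (h : ∀ m < L, G.Adj (y m) (y (m + 1)))
    (hinj : ∀ a b, a < b → b < L → y a ≠ y b)
    (halt : ∀ i < L, s(y i, y (i+1)) ∈ M ↔ Even i) :
    IsAltCycle G M ((Finset.range L).image (fun i => s(y i, y (i+1)))) := by
  obtain ⟨n, rfl⟩ : ∃ n, L = n + 1 := ⟨L-1, by omega⟩
  obtain ⟨p, hp1, hp2⟩ := aux_walk G y n 1 (fun m hm => h _ (by omega))
  rw [add_comm] at h0
  have hadj := h 0 (by omega)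
  have hinj' : ∀ a b, 1 ≤ a → a < b → b < 1 + (n+1) → y a ≠ y b := by
    intro a b h1 h2 h3
    rcases Nat.lt_or_ge b (n+1) with h4 | h4
    · exact hinj a b h2 h4
    · rw [show b = 1 + n by omega, h0]
      exact (hinj 0 a (by omega) (by omega)).symm
  have hE : (SimpleGraph.Walk.cons hadj (p.copy rfl h0)).edges =
      (List.range (n+1)).map (fun m => s(y m, y (m + 1))) := by
    rw [SimpleGraph.Walk.edges_cons, SimpleGraph.Walk.edges_copy, hp1, List.range_succ_eq_map]
    simp [Function.comp_def, add_comm]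
  refine ⟨y 0, SimpleGraph.Walk.cons hadj (p.copy rfl h0), ?_, ?_, ?_⟩
  · rw [SimpleGraph.Walk.cons_isCycle_iff]
    constructor
    · rw [SimpleGraph.Walk.isPath_copy, SimpleGraph.Walk.isPath_def, hp2]
      exact aux_nodup y _ 1 hinj'
    · rw [SimpleGraph.Walk.edges_copy, hp1]
      simp only [List.mem_map, List.mem_range, not_exists, not_and]
      intro m hm he
      rw [Sym2.eq_iff] at he
      rcases he with ⟨h1, h2⟩ | ⟨h1, h2⟩
      · exact hinj 0 (1+m) (by omega) (by omega) h1.symm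
      · rcases Nat.eq_zero_or_pos m with rfl | hm0
        · exact hinj 0 (1+0+1) (by omega) (by omega) h2.symm
        · exact hinj (0+1) (1+m) (by omega) (by omega) h1.symm
  · rw [hE]
    ext e
    simp
  · show List.IsChain _ _
    rw [hE, List.isChain_iff_getElem]
    intro i hi
    simp only [List.length_append, List.length_map, List.length_range, List.length_take] at hi
    have hi' : i < n + 1 := by omega
    rw [List.getElem_append_left (by simpa using hi')]
    simp only [List.getElem_map, List.getElem_range]
    rcases Nat.lt_or_ge (i+1) (n+1) with h4 | h4
    · rw [List.getElem_append_left (by simpa using h4)]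
      simp only [List.getElem_map, List.getElem_range]
      rw [halt _ hi', halt _ h4, Nat.even_add_one]
      tauto
    · rw [List.getElem_append_right (by simpa using h4)]
      simp only [List.length_map, List.length_range, List.getElem_take, List.getElem_map,
        List.getElem_range]
      have hin : i = n := by omega
      subst hin
      rw [halt _ hi', Nat.sub_self, halt 0 (by omega)]
      have := Nat.even_add_one.1 hLe
      simp at this
      simp [this]

/-- an `M`-alternating cycle traced by a periodic sequence of vertices. -/
def Cyc {V : Type*} [DecidableEq V] (G : SimpleGraph V) (M C : Finset (Sym2 V)) (k : ℕ)
    (x : ℕ → V) : Prop :=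
  2 ≤ k ∧ (∀ i, x (i + 2*k) = x i) ∧ (∀ a b, a < b → b < a + 2*k → x a ≠ x b) ∧
    (∀ i, G.Adj (x i) (x (i+1))) ∧ (∀ i, s(x i, x (i+1)) ∈ M ↔ Odd i) ∧
    C = (Finset.range (2*k)).image (fun i => s(x i, x (i+1)))

theorem aux_getElem_edges {V : Type*} {G : SimpleGraph V} {u v : V} (p : G.Walk u v) :
    ∀ (i : ℕ) (h : i < p.edges.length), p.edges[i] = s(p.getVert i, p.getVert (i+1)) := by
  induction p with
  | nil => intro i h; exact absurd h (Nat.not_lt_zero _)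
  | cons hadj q ih =>
    intro i h
    rcases i with _ | i
    · simp
    · simp only [SimpleGraph.Walk.edges_cons, List.getElem_cons_succ,
        SimpleGraph.Walk.getVert_cons_succ]
      exact ih i _

theorem aux_image_period {β : Type*} [DecidableEq β] (f : ℕ → β) (n : ℕ) 
    (hf : ∀ i, f (i+n) = f i) (c : ℕ) :
    (Finset.Ico c (c+n)).image f = (Finset.range n).image f := by
  induction c with
  | zero => rw [zero_add, Finset.range_eq_Ico]
  | succ c ih =>
    rw [← ih]
    rcases Nat.eq_zero_or_pos n with rfl | hn
    · simp
    ext e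
    simp only [Finset.mem_image, Finset.mem_Ico]
    constructor
    · rintro ⟨m, hm, rfl⟩
      by_cases h : m < c + n
      · exact ⟨m, by omega, rfl⟩
      · refine ⟨c, by omega, ?_⟩
        rw [show m = c + n by omega, hf]
    · rintro ⟨m, hm, rfl⟩
      by_cases h : m = c
      · exact ⟨c+n, by omega, by rw [hf, h]⟩
      · exact ⟨m, by omega, rfl⟩

theorem aux_exists_cyc {V : Type*} [DecidableEq V] (G : SimpleGraph V) (M C : Finset (Sym2 V))
    (h : IsAltCycle G M C) : ∃ k x, Cyc G M C k x := by
  obtain ⟨v, p, hp, hE, halt⟩ := h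
  have hl3 : 3 ≤ p.length := SimpleGraph.Walk.IsCircuit.three_le_length hp.isCircuit
  obtain ⟨l, hl⟩ : ∃ l, p.length = l := ⟨_, rfl⟩
  have hmod : ∀ i, p.getVert ((i+1) % l) = p.getVert (i % l + 1) := by
    intro i
    rcases Nat.lt_or_ge (i % l + 1) l with h1 | h1
    · rw [Nat.add_mod_of_add_mod_lt] 
      · rw [Nat.mod_eq_of_lt (a := 1) (by omega)]
      · rw [Nat.mod_eq_of_lt (a := 1) (by omega)]; exact h1
    · have h2 : i % l < l := Nat.mod_lt _ (by omega)
      have h3 : i % l + 1 = l := by omega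
      have : (i+1) % l = 0 := by
        rw [Nat.add_mod, Nat.mod_eq_of_lt (a := 1) (by omega), h3, Nat.mod_self]
      rw [this, h3, ← hl]
      simp
  let x : ℕ → V := fun i => p.getVert (i % l)
  have hxe : ∀ i, s(x i, x (i+1)) = s(p.getVert (i % l), p.getVert (i % l + 1)) := by
    intro i; simp only [x, hmod]
  have hper : ∀ i, x (i + l) = x i := by intro i; simp [x]
  have hinj : ∀ a b, a < b → b < a + l → x a ≠ x b := by
    intro a b h1 h2 h3
    have := hp.getVert_injOn' (x₁ := a % l) (x₂ := b % l)
      (by have := Nat.mod_lt a (y := l) (by omega); simp; omega)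
      (by have := Nat.mod_lt b (y := l) (by omega); simp; omega) h3
    have h4 : l ∣ b - a := (Nat.modEq_iff_dvd' h1.le).1 this
    have := Nat.le_of_dvd (by omega) h4
    omega
  have hadj : ∀ i, G.Adj (x i) (x (i+1)) := by
    intro i
    have := p.adj_getVert_succ (i := i % l) (by rw [hl]; exact Nat.mod_lt _ (by omega))
    rw [← hmod] at this
    exact this
  have hel : p.edges.length = l := by rw [SimpleGraph.Walk.length_edges, hl]
  have hstep0 : ∀ i < l, ¬ (s(x i, x (i+1)) ∈ M ↔ s(x (i+1), x (i+1+1)) ∈ M) := by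
    intro i hi
    have h1 : List.IsChain _ _ := halt
    rw [List.isChain_iff_getElem] at h1
    have h2 := h1 i (by simp [hel]; omega)
    rw [List.getElem_append_left (by omega), aux_getElem_edges] at h2
    rw [hxe, hxe, Nat.mod_eq_of_lt hi]
    rcases Nat.lt_or_ge (i+1) l with h4 | h4
    · rw [List.getElem_append_left (by omega), aux_getElem_edges] at h2
      rw [Nat.mod_eq_of_lt h4]
      exact h2
    · rw [List.getElem_append_right (by omega), List.getElem_take, aux_getElem_edges] at h2
      have h5 : i + 1 = l := by omega
      rw [h5, Nat.mod_self]
      rw [show i + 1 - p.edges.length = 0 by omega, h5] at h2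
      exact h2
  have hstep : ∀ i, ¬ (s(x i, x (i+1)) ∈ M ↔ s(x (i+1), x (i+1+1)) ∈ M) := by
    intro i
    have h1 := hstep0 (i % l) (Nat.mod_lt _ (by omega))
    have h2 : ∀ j, s(x (i % l + j), x (i % l + j + 1)) = s(x (i + j), x (i + j + 1)) := by
      intro j
      simp only [x, Nat.mod_add_mod, add_assoc]
    have h3 := h2 0
    have h4 := h2 1
    simp only [add_zero] at h3
    rw [h3, h4] at h1
    exact h1
  have hC : C = (Finset.range l).image (fun i => s(x i, x (i+1))) := by
    rw [← hE]
    ext e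
    simp only [List.mem_toFinset, Finset.mem_image, Finset.mem_range]
    constructor
    · intro he
      obtain ⟨i, hi, rfl⟩ := List.getElem_of_mem he
      refine ⟨i, by omega, ?_⟩
      rw [hxe, aux_getElem_edges, Nat.mod_eq_of_lt (by omega)]
    · rintro ⟨i, hi, rfl⟩
      rw [hxe, Nat.mod_eq_of_lt hi, ← aux_getElem_edges p i (by omega)]
      exact List.getElem_mem _
  have hpar : ∀ i, (s(x i, x (i+1)) ∈ M ↔ (s(x 0, x 1) ∈ M ↔ Even i)) := by
    intro i
    induction i with
    | zero => simp
    | succ i ih =>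
      have := hstep i
      rw [Nat.even_add_one]
      tauto
  have hle : Even l := by
    have h1 := hpar l
    have h2 : s(x l, x (l+1)) = s(x 0, x 1) := by
      have a := hper 0
      have b := hper 1
      rw [zero_add] at a
      rw [add_comm] at b
      rw [a, b]
    rw [h2] at h1
    tauto
  obtain ⟨k, hk⟩ := hle
  have hk2 : l = 2 * k := by omega
  subst hk2
  by_cases h0 : s(x 0, x 1) ∈ M
  · refine ⟨k, fun i => x (i+1), by omega, ?_, ?_, ?_, ?_, ?_⟩
    · intro i
      show x _ = x _
      rw [show i + 2*k + 1 = i + 1 + 2*k by ring, hper]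
    · intro a b h1 h2
      exact hinj _ _ (by omega) (by omega)
    · intro i; exact hadj _
    · intro i
      show s(x (i+1), x (i+1+1)) ∈ M ↔ _
      rw [hpar]
      simp [h0, Nat.even_add_one]
    · rw [hC]
      have := aux_image_period (fun i => s(x i, x (i+1))) (2*k) (by
        intro i
        show s(_, _) = s(_, _)
        rw [show i + 2*k + 1 = i + 1 + 2*k by ring, hper, hper]) 1
      rw [← this]
      ext e
      simp only [Finset.mem_image, Finset.mem_Ico, Finset.mem_range]
      constructor
      · rintro ⟨m, hm, rfl⟩
        exact ⟨m-1, by omega, by rw [show m - 1 + 1 = m by omega]⟩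
      · rintro ⟨m, hm, rfl⟩
        exact ⟨m+1, by omega, rfl⟩
  · refine ⟨k, x, by omega, hper, hinj, hadj, ?_, hC⟩
    intro i
    rw [hpar]
    simp [h0]

theorem Cyc.per {V : Type*} [DecidableEq V] {G : SimpleGraph V} {M C : Finset (Sym2 V)} {k : ℕ}
    {x : ℕ → V} (h : Cyc G M C k x) (i : ℕ) : x (i + 2*k) = x i := h.2.1 i

theorem Cyc.uniq {V : Type*} [DecidableEq V] {G : SimpleGraph V} {M C : Finset (Sym2 V)} {k : ℕ}
    {x : ℕ → V} (h : Cyc G M C k x) (a b : ℕ) (hab : x a = x b) (h1 : a < b + 2*k)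
    (h2 : b < a + 2*k) : a = b := by
  rcases lt_trichotomy a b with h' | h' | h'
  · exact absurd hab (h.2.2.1 _ _ h' h2)
  · exact h'
  · exact absurd hab.symm (h.2.2.1 _ _ h' h1)

theorem Cyc.perE {V : Type*} [DecidableEq V] {G : SimpleGraph V} {M C : Finset (Sym2 V)} {k : ℕ}
    {x : ℕ → V} (h : Cyc G M C k x) (i : ℕ) :
    s(x (i + 2*k), x (i + 2*k + 1)) = s(x i, x (i+1)) := by
  rw [show i + 2*k + 1 = i + 1 + 2*k by ring, h.per, h.per]

theorem Cyc.eqC {V : Type*} [DecidableEq V] {G : SimpleGraph V} {M C : Finset (Sym2 V)} {k : ℕ}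
    {x : ℕ → V} (h : Cyc G M C k x) (c : ℕ) :
    C = (Finset.Ico c (c + 2*k)).image (fun i => s(x i, x (i+1))) := by
  rw [aux_image_period (fun i => s(x i, x (i+1))) (2*k) h.perE c]
  exact h.2.2.2.2.2

theorem Cyc.memC {V : Type*} [DecidableEq V] {G : SimpleGraph V} {M C : Finset (Sym2 V)} {k : ℕ}
    {x : ℕ → V} (h : Cyc G M C k x) (c : ℕ) : s(x c, x (c+1)) ∈ C := by
  rw [h.eqC c]
  have := h.1
  exact Finset.mem_image.2 ⟨c, by rw [Finset.mem_Ico]; omega, rfl⟩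

theorem Cyc.injE {V : Type*} [DecidableEq V] {G : SimpleGraph V} {M C : Finset (Sym2 V)} {k : ℕ}
    {x : ℕ → V} (h : Cyc G M C k x) (a b : ℕ) (hab : s(x a, x (a+1)) = s(x b, x (b+1)))
    (h1 : a < b + 2*k) (h2 : b < a + 2*k) : a = b := by
  have hk := h.1
  rcases Sym2.eq_iff.1 hab with ⟨h3, -⟩ | ⟨h3, h4⟩
  · exact h.uniq _ _ h3 h1 h2
  · rcases Nat.lt_or_ge a b with h5 | h5
    · by_cases h6 : b + 1 < a + 2*k
      · have := h.uniq _ _ h3 (by omega) (by omega)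
        omega
      · have := h.uniq _ _ h4 (by omega) (by omega)
        omega
    · by_cases h6 : a + 1 < b + 2*k
      · have := h.uniq _ _ h4 (by omega) (by omega)
        omega
      · have := h.uniq _ _ h3 (by omega) (by omega)
        omega

theorem Cyc.chord {V : Type*} [DecidableEq V] {G : SimpleGraph V} {M C : Finset (Sym2 V)} {k : ℕ}
    {x : ℕ → V} (h : Cyc G M C k x) (hM : IsPM G M) (p q : ℕ) (h1 : p + 2 ≤ q)
    (h2 : q + 2 ≤ p + 2*k) : s(x p, x q) ∉ C ∧ s(x p, x q) ∉ M := by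
  have hC : s(x p, x q) ∉ C := by
    rw [h.eqC p]
    intro hmem
    obtain ⟨i, hi, he⟩ := Finset.mem_image.1 hmem
    rw [Finset.mem_Ico] at hi
    rcases Sym2.eq_iff.1 he with ⟨h3, h4⟩ | ⟨h3, h4⟩
    · have := h.uniq _ _ h3 (by omega) (by omega)
      have := h.uniq _ _ h4 (by omega) (by omega)
      omega
    · have := h.uniq _ _ h3 (by omega) (by omega)
      have := h.uniq _ _ h4 (by omega) (by omega)
      omega
  refine ⟨hC, fun hm => ?_⟩
  have hk := h.1
  have hex : ∃ e ∈ C, e ∈ M ∧ x p ∈ e := by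
    rcases Nat.even_or_odd p with hp | hp
    · refine ⟨_, h.memC (p + 2*k - 1), ?_, ?_⟩
      · rw [h.2.2.2.2.1]
        rw [Nat.even_iff] at hp
        rw [Nat.odd_iff]
        omega
      · rw [show p + 2*k - 1 + 1 = p + 2*k by omega, h.per]
        simp
    · exact ⟨_, h.memC p, (h.2.2.2.2.1 p).2 hp, by simp⟩
  obtain ⟨e, heC, heM, hpe⟩ := hex
  have := (hM.2 (x p)).unique ⟨heM, hpe⟩ ⟨hm, by simp⟩
  rw [this] at heC
  exact hC heC

theorem aux_wt_notMem {V : Type*} [DecidableEq V] (red : Sym2 V → Bool) (M : Finset (Sym2 V))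
    (e : Sym2 V) (h : e ∉ M) : wt red M e = 0 ∨ wt red M e = 1 := by
  unfold wt
  by_cases hr : red e <;> simp [h, hr]

theorem aux_wt_mem {V : Type*} [DecidableEq V] (red : Sym2 V → Bool) (M : Finset (Sym2 V))
    (e : Sym2 V) (h : e ∈ M) : wt red M e = 0 ∨ wt red M e = -1 := by
  unfold wt
  by_cases hr : red e <;> simp [h, hr]

theorem Cyc.cut {V : Type*} [DecidableEq V] {G : SimpleGraph V} {M C : Finset (Sym2 V)} {k : ℕ}
    {x : ℕ → V} (h : Cyc G M C k x) (a1 b1 a2 b2 : ℕ)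
    (ha1 : a1 % 2 = 0) (hb1 : b1 % 2 = 1) (ha2 : a2 % 2 = 0) (hb2 : b2 % 2 = 1)
    (h1 : a1 < b1) (h2 : b1 < a2) (h3 : a2 < b2) (h4 : b2 < a1 + 2*k)
    (hA : G.Adj (x a1) (x a2)) (hB : G.Adj (x b1) (x b2))
    (hAM : s(x a1, x a2) ∉ M) (hBM : s(x b1, x b2) ∉ M) :
    IsAltCycle G M ((Finset.Ico b1 a2 ∪ Finset.Ico b2 (a1 + 2*k)).image
      (fun i => s(x i, x (i+1))) ∪ {s(x a1, x a2), s(x b1, x b2)}) := by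
  obtain ⟨d, hd⟩ : ∃ d, a2 = b1 + d := ⟨a2 - b1, by omega⟩
  obtain ⟨f, hf⟩ : ∃ f, a1 + 2*k = b2 + f := ⟨a1 + 2*k - b2, by omega⟩
  let y : ℕ → V := fun m => if m ≤ d then x (b1 + m) else
    if m ≤ d + 1 + f then x (b2 + f + d + 1 - m) else x b1
  have y1 : ∀ m, m ≤ d → y m = x (b1 + m) := fun m hm => by simp only [y, if_pos hm]
  have y2 : ∀ m, d < m → m ≤ d + 1 + f → y m = x (b2 + f + d + 1 - m) := fun m hm hm' => by
    simp only [y, if_neg (not_le.2 hm), if_pos hm']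
  have y3 : y (d + 1 + f + 1) = x b1 := by
    simp only [y]
    rw [if_neg (by omega), if_neg (by omega)]
  have hx : x (b2 + f) = x a1 := by rw [← hf, h.per]
  have E1 : ∀ m, m < d → s(y m, y (m+1)) = s(x (b1 + m), x (b1 + m + 1)) := by
    intro m hm
    rw [y1 m hm.le, y1 (m+1) hm]
    rfl
  have E2 : s(y d, y (d+1)) = s(x a1, x a2) := by
    rw [y1 d le_rfl, y2 (d+1) (by omega) (by omega), Sym2.eq_swap, ← hd]
    rw [show b2 + f + d + 1 - (d+1) = b2 + f by omega, hx]
  have E3 : ∀ m, d < m → m < d + 1 + f →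
      s(y m, y (m+1)) = s(x (b2 + f + d - m), x (b2 + f + d - m + 1)) := by
    intro m hm hm'
    rw [y2 m hm hm'.le, y2 (m+1) (by omega) hm', Sym2.eq_swap]
    rw [show b2 + f + d + 1 - (m+1) = b2 + f + d - m by omega,
      show b2 + f + d + 1 - m = b2 + f + d - m + 1 by omega]
  have E4 : s(y (d + 1 + f), y (d + 1 + f + 1)) = s(x b1, x b2) := by
    rw [y3, y2 _ (by omega) le_rfl, Sym2.eq_swap]
    rw [show b2 + f + d + 1 - (d + 1 + f) = b2 by omega]
  have cases4 : ∀ m < d + 1 + f + 1, m < d ∨ m = d ∨ (d < m ∧ m < d + 1 + f) ∨ m = d + 1 + f := by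
    intro m hm; omega
  have hset : (Finset.Ico b1 a2 ∪ Finset.Ico b2 (a1 + 2*k)).image
      (fun i => s(x i, x (i+1))) ∪ {s(x a1, x a2), s(x b1, x b2)} =
      (Finset.range (d + 1 + f + 1)).image (fun i => s(y i, y (i+1))) := by
    ext e
    simp only [Finset.mem_union, Finset.mem_image, Finset.mem_Ico, Finset.mem_insert,
      Finset.mem_singleton, Finset.mem_range]
    constructor
    · rintro (⟨i, hi | hi, rfl⟩ | rfl | rfl)
      · refine ⟨i - b1, by omega, ?_⟩
        rw [E1 _ (by omega), show b1 + (i - b1) = i by omega]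
      · refine ⟨b2 + f + d - i, by omega, ?_⟩
        rw [E3 _ (by omega) (by omega), show b2 + f + d - (b2 + f + d - i) = i by omega]
      · exact ⟨d, by omega, E2⟩
      · exact ⟨_, by omega, E4⟩
    · rintro ⟨m, hm, rfl⟩
      rcases cases4 m hm with h5 | rfl | h5 | rfl
      · left
        exact ⟨b1 + m, by omega, (E1 m h5).symm⟩
      · right; left; exact E2
      · left
        exact ⟨b2 + f + d - m, by omega, (E3 m h5.1 h5.2).symm⟩
      · right; right; exact E4
  rw [hset]
  apply aux_cycle
  · omega
  · rw [Nat.even_iff]; omega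
  · rw [y3, y1 0 (by omega), add_zero]
  · intro m hm
    have hadj := h.2.2.2.1
    rw [← SimpleGraph.mem_edgeSet]
    rcases cases4 m hm with h5 | rfl | h5 | rfl
    · rw [E1 m h5]; exact hadj _
    · rw [E2]; exact hA
    · rw [E3 m h5.1 h5.2]; exact hadj _
    · rw [E4]; exact hB
  · intro a b hab hb heq
    rcases Nat.lt_or_ge d a with h5 | h5
    · rw [y2 a h5 (by omega), y2 b (by omega) (by omega)] at heq
      have := h.uniq _ _ heq (by omega) (by omega)
      omega
    · rcases Nat.lt_or_ge d b with h6 | h6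
      · rw [y1 a h5, y2 b (by omega) (by omega)] at heq
        have := h.uniq _ _ heq (by omega) (by omega)
        omega
      · rw [y1 a h5, y1 b h6] at heq
        have := h.uniq _ _ heq (by omega) (by omega)
        omega
  · intro m hm
    have halt := h.2.2.2.2.1
    rcases cases4 m hm with h5 | rfl | h5 | rfl
    · rw [E1 m h5, halt, Nat.odd_iff, Nat.even_iff]; omega
    · rw [E2, Nat.even_iff]
      exact ⟨fun h' => absurd h' hAM, fun h' => by omega⟩
    · rw [E3 m h5.1 h5.2, halt, Nat.odd_iff, Nat.even_iff]; omega
    · rw [E4, Nat.even_iff]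
      exact ⟨fun h' => absurd h' hBM, fun h' => by omega⟩

theorem Cyc.skip {V : Type*} [DecidableEq V] {G : SimpleGraph V} (red : Sym2 V → Bool)
    {M C : Finset (Sym2 V)} {k : ℕ}
    {x : ℕ → V} (h : Cyc G M C k x) (hM : IsPM G M) (a1 b1 a2 b2 : ℕ)
    (ha1 : a1 % 2 = 0) (hb1 : b1 % 2 = 1) (ha2 : a2 % 2 = 0) (hb2 : b2 % 2 = 1)
    (h1 : a1 + 3 ≤ b1) (h2 : b1 < a2) (h3 : a2 + 3 ≤ b2) (h4 : b2 < a1 + 2*k)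
    (hA : G.Adj (x a1) (x a2)) (hB : G.Adj (x b1) (x b2)) (τ : ℤ) (hτ : τ = 2 ∨ τ = -1)
    (hw1 : ∑ i ∈ Finset.Ico a1 b1, wt red M s(x i, x (i+1)) = τ)
    (hw2 : ∑ i ∈ Finset.Ico a2 b2, wt red M s(x i, x (i+1)) = τ) :
    ∃ S : Skip G red M C, S.In ((Finset.Ico a1 b2).image (fun i => s(x i, x (i+1)))) ∧
      0 ≤ S.w + 2 * τ ∧ S.w + 2 * τ ≤ 2 := by
  obtain ⟨hAC, hAM⟩ := h.chord hM a1 a2 (by omega) (by omega)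
  obtain ⟨hBC, hBM⟩ := h.chord hM b1 b2 (by omega) (by omega)
  have hne : s(x a1, x a2) ≠ s(x b1, x b2) := by
    intro he
    rcases Sym2.eq_iff.1 he with ⟨h5, h6⟩ | ⟨h5, h6⟩
    · have := h.uniq _ _ h5 (by omega) (by omega)
      omega
    · have := h.uniq _ _ h5 (by omega) (by omega)
      omega
  have hcut := h.cut a1 b1 a2 b2 ha1 hb1 ha2 hb2 (by omega) h2 (by omega) h4 hA hB hAM hBM
  have hinj : Set.InjOn (fun i => s(x i, x (i+1))) (Finset.Ico a1 (a1 + 2*k) : Finset ℕ) := by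
    intro a ha b hb hab
    simp only [Finset.coe_Ico, Set.mem_Ico] at ha hb
    exact h.injE a b hab (by omega) (by omega)
  have hI : Finset.Ico b1 a2 ∪ Finset.Ico b2 (a1 + 2*k) ⊆ Finset.Ico a1 (a1 + 2*k) := by
    intro i hi
    simp only [Finset.mem_union, Finset.mem_Ico] at hi ⊢
    omega
  have hsubC : (Finset.Ico b1 a2 ∪ Finset.Ico b2 (a1 + 2*k)).image
      (fun i => s(x i, x (i+1))) ⊆ C := by
    rw [h.eqC a1]
    exact Finset.image_subset_image hI
  have hdI : Disjoint (Finset.Ico b1 a2) (Finset.Ico b2 (a1 + 2*k)) := by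
    rw [Finset.disjoint_left]
    intro i hi hi'
    simp only [Finset.mem_Ico] at hi hi'
    omega
  have hdis : Disjoint ((Finset.Ico b1 a2 ∪ Finset.Ico b2 (a1 + 2*k)).image
      (fun i => s(x i, x (i+1)))) {s(x a1, x a2), s(x b1, x b2)} := by
    rw [Finset.disjoint_right]
    intro e he he'
    have := hsubC he'
    simp only [Finset.mem_insert, Finset.mem_singleton] at he
    rcases he with rfl | rfl
    · exact hAC this
    · exact hBC this
  have hcardC : C.card = 2 * k := by
    rw [h.eqC a1, Finset.card_image_of_injOn hinj, Nat.card_Ico]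
    omega
  have hwC : wSum red M C = ∑ i ∈ Finset.Ico a1 (a1 + 2*k), wt red M s(x i, x (i+1)) := by
    unfold wSum
    conv_lhs => rw [h.eqC a1]
    rw [Finset.sum_image hinj]
  have hwC' : wSum red M ((Finset.Ico b1 a2 ∪ Finset.Ico b2 (a1 + 2*k)).image
      (fun i => s(x i, x (i+1))) ∪ {s(x a1, x a2), s(x b1, x b2)}) =
      ∑ i ∈ Finset.Ico b1 a2, wt red M s(x i, x (i+1)) +
      ∑ i ∈ Finset.Ico b2 (a1 + 2*k), wt red M s(x i, x (i+1)) +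
      (wt red M s(x a1, x a2) + wt red M s(x b1, x b2)) := by
    unfold wSum
    rw [Finset.sum_union hdis, Finset.sum_pair hne, Finset.sum_image (hinj.mono (by exact_mod_cast hI)),
      Finset.sum_union hdI]
  have hsplit : ∑ i ∈ Finset.Ico a1 (a1 + 2*k), wt red M s(x i, x (i+1)) =
      ∑ i ∈ Finset.Ico a1 b1, wt red M s(x i, x (i+1)) +
      ∑ i ∈ Finset.Ico b1 a2, wt red M s(x i, x (i+1)) +
      ∑ i ∈ Finset.Ico a2 b2, wt red M s(x i, x (i+1)) +
      ∑ i ∈ Finset.Ico b2 (a1 + 2*k), wt red M s(x i, x (i+1)) := by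
    rw [Finset.sum_Ico_consecutive _ (by omega) (by omega),
      Finset.sum_Ico_consecutive _ (by omega) (by omega),
      Finset.sum_Ico_consecutive _ (by omega) (by omega)]
  have hwA := aux_wt_notMem red M _ hAM
  have hwB := aux_wt_notMem red M _ hBM
  have hwS : wSum red M ((Finset.Ico b1 a2 ∪ Finset.Ico b2 (a1 + 2*k)).image
      (fun i => s(x i, x (i+1))) ∪ {s(x a1, x a2), s(x b1, x b2)}) - wSum red M C =
      (wt red M s(x a1, x a2) + wt red M s(x b1, x b2)) - 2 * τ := by
    rw [hwC', hwC, hsplit, hw1, hw2]; ring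
  refine ⟨{ e1 := s(x a1, x a2), e2 := s(x b1, x b2), C' := _, hne := hne, he1G := hA, he2G := hB,
            he1M := hAM, he2M := hBM, he1C := hAC, he2C := hBC, halt := hcut,
            hmem1 := ?_, hmem2 := ?_, hsub := ?_, hsmall := ?_, hwbound := ?_ }, ?_, ?_⟩
  · simp
  · simp
  · intro e he
    rw [Finset.mem_sdiff, Finset.mem_union] at he
    exact hsubC (he.1.resolve_right he.2)
  · rw [hcardC, Finset.card_union_of_disjoint hdis, Finset.card_pair hne,
      Finset.card_image_of_injOn (hinj.mono (by exact_mod_cast hI)),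
      Finset.card_union_of_disjoint hdI, Nat.card_Ico, Nat.card_Ico]
    omega
  · rw [hwS, abs_le]
    omega
  · intro e he
    simp only [Finset.mem_sdiff] at he
    obtain ⟨heC, hne'⟩ := he
    rw [h.eqC a1] at heC
    obtain ⟨i, hi, rfl⟩ := Finset.mem_image.1 heC
    rw [Finset.mem_Ico] at hi
    refine Finset.mem_image.2 ⟨i, ?_, rfl⟩
    rw [Finset.mem_Ico]
    refine ⟨hi.1, ?_⟩
    by_contra hlt
    apply hne'
    refine Finset.mem_union_left _ (Finset.mem_image.2 ⟨i, ?_, rfl⟩)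
    refine Finset.mem_union_right _ (Finset.mem_Ico.2 ⟨by omega, hi.2⟩)
  · unfold Skip.w
    simp only
    rw [hwS]
    omega

theorem Cyc.manySkips {V : Type*} [Fintype V] [DecidableEq V] {G : SimpleGraph V}
    (red : Sym2 V → Bool) {M C : Finset (Sym2 V)} {k : ℕ}
    {x : ℕ → V} (h : Cyc G M C k x) (hM : IsPM G M) (σ : ℤ) (hσ : σ = 1 ∨ σ = -1) (N : ℕ)
    (hbig : 2 * (N : ℤ) * 4 ^ indepNum G ≤ σ * wSum red M C) :
    ∃ S : Fin N → Skip G red M C, (∀ b, 2 ≤ -σ * (S b).w ∧ -σ * (S b).w ≤ 4) ∧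
      ∀ b b', b ≠ b' → Skip.Disj (S b) (S b') := by
  classical
  obtain ⟨R, hR⟩ : ∃ R : ℕ, R = 4 ^ indepNum G := ⟨_, rfl⟩
  let g : ℕ → ℤ := fun i => wt red M s(x i, x (i+1))
  let P : ℕ → ℤ := fun n => ∑ i ∈ Finset.range n, g i
  have hadj := h.2.2.2.1
  have halt := h.2.2.2.2.1
  have hwC : wSum red M C = P (2*k) := by
    unfold wSum
    conv_lhs => rw [h.2.2.2.2.2]
    rw [Finset.sum_image]
    intro a ha b hb hab
    simp only [Finset.coe_range, Set.mem_Iio] at ha hb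
    exact h.injE a b hab (by omega) (by omega)
  have he : ∀ n, P (2*n+1) = P (2*n) ∨ P (2*n+1) = P (2*n) + 1 := by
    intro n
    have h1 : P (2*n+1) = P (2*n) + g (2*n) := Finset.sum_range_succ _ _
    have h2 : g (2*n) = 0 ∨ g (2*n) = 1 := aux_wt_notMem _ _ _ (by
      rw [halt, Nat.odd_iff]; omega)
    omega
  have ho : ∀ n, P (2*n+2) = P (2*n+1) ∨ P (2*n+2) = P (2*n+1) - 1 := by
    intro n
    have h1 : P (2*n+1+1) = P (2*n+1) + g (2*n+1) := Finset.sum_range_succ _ _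
    have h2 : g (2*n+1) = 0 ∨ g (2*n+1) = -1 := aux_wt_mem _ _ _ (by
      rw [halt, Nat.odd_iff]; omega)
    rw [show 2*n+2 = 2*n+1+1 by ring]
    omega
  have hP0 : P (2*0) = 0 := by simp [P]
  obtain ⟨τ, hτ, hτσ, i, j, hij, hmono⟩ : ∃ τ : ℤ, (τ = 2 ∨ τ = -1) ∧
      ((τ = 2 ∧ σ = 1) ∨ (τ = -1 ∧ σ = -1)) ∧ ∃ i j : ℕ → ℕ,
      (∀ n < N * R, 0 ≤ i n ∧ i n < j n ∧ j n < k ∧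
        P (2 * j n + 1) - P (2 * i n) = τ) ∧ ∀ m n, m < n → n < N * R → j m < i n := by
    have hb : 2 * ((N * R : ℕ) : ℤ) ≤ σ * (P (2*k) - P (2*0)) := by
      rw [hP0, ← hwC, hR]
      push_cast
      linarith
    rcases hσ with rfl | rfl
    · refine ⟨2, Or.inl rfl, Or.inl ⟨rfl, rfl⟩, ?_⟩
      refine aux_segments P k 1 2 ?_ (N*R) 0 (by omega) hb
      intro c hc hc2
      obtain ⟨j, h1, h2, h3, h4⟩ := aux_step_pos P he ho k c hc (by linarith)
      exact ⟨j, h1, h2, h3, by linarith⟩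
    · refine ⟨-1, Or.inr rfl, Or.inr ⟨rfl, rfl⟩, ?_⟩
      refine aux_segments P k (-1) (-1) ?_ (N*R) 0 (by omega) hb
      intro c hc hc2
      obtain ⟨j, h1, h2, h3, h4⟩ := aux_step_neg P he ho k c hc (by linarith)
      exact ⟨j, h1, h2, h3, by linarith⟩
  have hseg : ∀ n < N * R, ∑ u ∈ Finset.Ico (2 * i n) (2 * j n + 1), wt red M s(x u, x (u+1)) = τ := by
    intro n hn
    obtain ⟨-, h1, -, h2⟩ := hij n hn
    rw [← h2]
    exact Finset.sum_Ico_eq_sub g (by omega)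
  have key : ∀ b : Fin N, ∃ (S : Skip G red M C) (m n : ℕ), b * R ≤ m ∧ m < n ∧ n < (b + 1) * R ∧
      S.In ((Finset.Ico (2 * i m) (2 * j n + 1)).image (fun u => s(x u, x (u+1)))) ∧
      0 ≤ S.w + 2 * τ ∧ S.w + 2 * τ ≤ 2 := by
    intro b
    have hbN : ((b : ℕ) + 1) * R ≤ N * R := Nat.mul_le_mul_right _ b.2
    have hcard : 2 ^ (indepNum G + indepNum G) ≤ (Finset.Ico (b * R) ((b + 1) * R)).card := by
      rw [Nat.card_Ico, Nat.add_mul, one_mul, Nat.add_sub_cancel_left, hR, ← two_mul, pow_mul]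
      norm_num
    -- a set of at least `α + 1` indices contains an adjacent pair
    have hpair : ∀ (v : ℕ → ℕ) (B : Finset ℕ), (∀ a ∈ B, ∀ b ∈ B, a ≠ b → x (v a) ≠ x (v b)) →
        B.card = indepNum G + 1 → (∀ a ∈ B, ∀ b ∈ B, a ≠ b → ¬ G.Adj (x (v a)) (x (v b))) →
        False := by
      intro v B hinj hB hno
      have h1 : (B.image (fun a => x (v a))).card = B.card := by
        apply Finset.card_image_of_injOn
        intro a ha b hb hab
        by_contra hne
        exact hinj a ha b hb hne hab
      have h2 := aux_indep G (B.image (fun a => x (v a))) (by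
        intro a ha b hb hab
        obtain ⟨a', ha', rfl⟩ := Finset.mem_image.1 ha
        obtain ⟨b', hb', rfl⟩ := Finset.mem_image.1 hb
        exact hno a' ha' b' hb' (fun h => hab (by rw [h])))
      omega
    have hdist : ∀ a c, a < c → c < N * R → i a < i c ∧ j a < j c ∧ j c < k := by
      intro a c h1 h2
      have h3 := hij a (by omega)
      have h4 := hij c h2
      have h5 := hmono a c h1 h2
      omega
    have hinji : ∀ a ∈ Finset.Ico (b * R) ((b + 1) * R), ∀ c ∈ Finset.Ico (b * R) ((b + 1) * R),
        a ≠ c → x (2 * i a) ≠ x (2 * i c) := by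
      intro a ha c hc hne heq
      rw [Finset.mem_Ico] at ha hc
      have h1 := hij a (by omega)
      have h2 := hij c (by omega)
      have h3 := h.uniq _ _ heq (by omega) (by omega)
      rcases Nat.lt_or_gt_of_ne hne with h4 | h4
      · have := hdist a c h4 (by omega)
        omega
      · have := hdist c a h4 (by omega)
        omega
    have hinjj : ∀ a ∈ Finset.Ico (b * R) ((b + 1) * R), ∀ c ∈ Finset.Ico (b * R) ((b + 1) * R),
        a ≠ c → x (2 * j a + 1) ≠ x (2 * j c + 1) := by
      intro a ha c hc hne heq
      rw [Finset.mem_Ico] at ha hc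
      have h1 := hij a (by omega)
      have h2 := hij c (by omega)
      have h3 := h.uniq _ _ heq (by omega) (by omega)
      rcases Nat.lt_or_gt_of_ne hne with h4 | h4
      · have := hdist a c h4 (by omega)
        omega
      · have := hdist c a h4 (by omega)
        omega
    rcases aux_ramsey (fun a c => G.Adj (x (2 * i a)) (x (2 * i c))) (fun a c hac => hac.symm)
        _ _ _ rfl _ hcard with ⟨B, hBA, hBc, hB⟩ | ⟨B, hBA, hBc, hB⟩
    · have : ∃ m ∈ B, ∃ n ∈ B, m < n ∧ G.Adj (x (2 * j m + 1)) (x (2 * j n + 1)) := by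
        by_contra hno
        push Not at hno
        refine hpair (fun a => 2 * j a + 1) B (fun a ha c hc => hinjj a (hBA ha) c (hBA hc)) hBc ?_
        intro a ha c hc hne hac
        rcases Nat.lt_or_gt_of_ne hne with h4 | h4
        · exact hno a ha c hc h4 hac
        · exact hno c hc a ha h4 hac.symm
      obtain ⟨m, hm, n, hn, hmn, hJ⟩ := this
      have hI := hB m hm n hn hmn.ne
      have hm' := Finset.mem_Ico.1 (hBA hm)
      have hn' := Finset.mem_Ico.1 (hBA hn)
      have h1 := hij m (by omega)
      have h2 := hij n (by omega)
      have h3 := hmono m n hmn (by omega)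
      obtain ⟨S, hS1, hS2⟩ := h.skip red hM (2 * i m) (2 * j m + 1) (2 * i n) (2 * j n + 1)
        (by omega) (by omega) (by omega) (by omega) (by omega) (by omega) (by omega) (by omega)
        hI hJ τ hτ (hseg m (by omega)) (hseg n (by omega))
      exact ⟨S, m, n, hm'.1, hmn, hn'.2, hS1, hS2⟩
    · exact (hpair (fun a => 2 * i a) B (fun a ha c hc => hinji a (hBA ha) c (hBA hc)) hBc hB).elim
  choose S m n hm hmn hn hIn hS1 hS2 using key
  refine ⟨S, ?_, ?_⟩
  · intro b
    have h1 := hS1 b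
    have h2 := hS2 b
    rcases hτσ with ⟨rfl, rfl⟩ | ⟨rfl, rfl⟩
    · omega
    · omega
  · have hpath : ∀ b : Fin N, (Finset.Ico (2 * i (m b)) (2 * j (n b) + 1)).image
          (fun u => s(x u, x (u+1))) ⊆ C ∧
        IsAltPath G M ((Finset.Ico (2 * i (m b)) (2 * j (n b) + 1)).image
          (fun u => s(x u, x (u+1)))) ∧ i (m b) < j (n b) ∧ j (n b) < k := by
      intro b
      have hbN : ((b : ℕ) + 1) * R ≤ N * R := Nat.mul_le_mul_right _ b.2
      have h0 := hn b
      have h0' := hmn b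
      have h1 := hij (m b) (by omega)
      have h2 := hij (n b) (by omega)
      have h3 := hmono (m b) (n b) (hmn b) (by omega)
      refine ⟨?_, ?_, by omega, by omega⟩
      · intro e he
        obtain ⟨u, -, rfl⟩ := Finset.mem_image.1 he
        exact h.memC u
      · have := aux_path G M x (2 * j (n b) + 1 - 2 * i (m b)) (2 * i (m b)) hadj (by
          intro u v h5 h6 h7
          exact h.2.2.1 u v h6 (by omega)) halt
        rw [show 2 * i (m b) + (2 * j (n b) + 1 - 2 * i (m b)) = 2 * j (n b) + 1 by omega] at this
        exact this
    have hlt : ∀ b b' : Fin N, b < b' → Disjoint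
        ((Finset.Ico (2 * i (m b)) (2 * j (n b) + 1)).image (fun u => s(x u, x (u+1))))
        ((Finset.Ico (2 * i (m b')) (2 * j (n b') + 1)).image (fun u => s(x u, x (u+1)))) := by
      intro b b' hbb
      have hbN : ((b' : ℕ) + 1) * R ≤ N * R := Nat.mul_le_mul_right _ b'.2
      have hbb' : ((b : ℕ) + 1) * R ≤ b' * R := Nat.mul_le_mul_right _ hbb
      have h0 := hn b
      have h0' := hm b'
      have h1 := hn b'
      have h1' := hmn b'
      have h2 := hmono (n b) (m b') (by omega) (by omega)
      have h3 := hpath b'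
      rw [Finset.disjoint_left]
      intro e he he'
      obtain ⟨u, hu, rfl⟩ := Finset.mem_image.1 he
      obtain ⟨v, hv, hvu⟩ := Finset.mem_image.1 he'
      rw [Finset.mem_Ico] at hu hv
      have := h.injE v u hvu (by omega) (by omega)
      omega
    intro b b' hne
    refine ⟨_, _, (hpath b).1, (hpath b').1, ?_, (hpath b).2.1, (hpath b').2.1, hIn b, hIn b'⟩
    rcases lt_or_gt_of_ne hne with h1 | h1
    · exact hlt b b' h1
    · exact (hlt b' b h1).symm

theorem aux_skipList {V : Type*} [Fintype V] [DecidableEq V] {G : SimpleGraph V}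
    (red : Sym2 V → Bool) {M C : Finset (Sym2 V)} (h : IsAltCycle G M C) (hM : IsPM G M)
    (σ : ℤ) (hσ : σ = 1 ∨ σ = -1) (q : ℕ)
    (hbig : 2 * (3 * (q : ℤ)) * 4 ^ indepNum G ≤ σ * wSum red M C) :
    ∃ (a : ℕ) (l : List (Skip G red M C)), 2 ≤ a ∧ a ≤ 4 ∧ q ≤ l.length ∧
      l.Pairwise Skip.Disj ∧ ∀ S ∈ l, S.w = -σ * a := by
  classical
  obtain ⟨k, x, hx⟩ := aux_exists_cyc G M C h
  obtain ⟨S, hS, hdis⟩ := hx.manySkips red hM σ hσ (3*q) (by push_cast; exact hbig)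
  have hpig : ∃ a ∈ Finset.Icc (2:ℤ) 4, q ≤ (Finset.univ.filter
      (fun b : Fin (3*q) => -σ * (S b).w = a)).card := by
    apply Finset.exists_le_card_fiber_of_mul_le_card_of_maps_to
    · intro b _
      rw [Finset.mem_Icc]; exact hS b
    · exact ⟨2, by simp⟩
    · simp
  obtain ⟨a, ha, hq⟩ := hpig
  rw [Finset.mem_Icc] at ha
  obtain ⟨n, rfl⟩ := Int.eq_ofNat_of_zero_le (show 0 ≤ a by omega)
  refine ⟨n, (Finset.univ.filter
      (fun b : Fin (3*q) => -σ * (S b).w = (n : ℤ))).toList.map S, by omega, by omega, ?_, ?_, ?_⟩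
  · simpa using hq
  · rw [List.pairwise_map]
    exact List.Nodup.pairwise_of_forall_ne (Finset.nodup_toList _) (fun b _ b' _ hne => hdis b b' hne)
  · intro T hT
    obtain ⟨b, hb, rfl⟩ := List.mem_map.1 hT
    rw [Finset.mem_toList, Finset.mem_filter] at hb
    rcases hσ with rfl | rfl
    · linarith [hb.2]
    · linarith [hb.2]

theorem aux_sum_const {β : Type*} (f : β → ℤ) (c : ℤ) (l : List β) (h : ∀ a ∈ l, f a = c) :
    (l.map f).sum = l.length * c := by
  induction l with
  | nil => simp
  | cons a l ih =>
    rw [List.map_cons, List.sum_cons, ih (fun b hb => h b (by simp [hb])), h a (by simp)]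
    push_cast [List.length_cons]
    ring

/-- take `m` skips from a list as a list of skips on cycles of the family -/
theorem aux_lift {V : Type*} [DecidableEq V] {G : SimpleGraph V}
    (red : Sym2 V → Bool) {M C : Finset (Sym2 V)} {𝒞 : Finset (Finset (Sym2 V))} (hC : C ∈ 𝒞)
    (l : List (Skip G red M C)) (hl : l.Pairwise Skip.Disj) (c : ℤ) (hw : ∀ S ∈ l, S.w = c)
    (m : ℕ) (hm : m ≤ l.length) :
    ∃ L : List (SkipOn G red M 𝒞), L.length = m ∧ L.Pairwise SkipOn.Disj ∧ (∀ T ∈ L, T.C = C) ∧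
      (L.map fun T => T.S.w).sum = m * c := by
  refine ⟨(l.take m).map (fun S => ⟨C, hC, S⟩), by simpa using hm, ?_, ?_, ?_⟩
  · rw [List.pairwise_map]
    refine (hl.sublist (List.take_sublist _ _)).imp ?_
    intro S S' h
    exact Or.inr ⟨rfl, h⟩
  · intro T hT
    obtain ⟨S, -, rfl⟩ := List.mem_map.1 hT
    rfl
  · rw [aux_sum_const _ c]
    · simp [hm]
    · intro T hT
      obtain ⟨S, hS, rfl⟩ := List.mem_map.1 hT
      exact hw S (List.mem_of_mem_take hS)

theorem aux_main {V : Type*} [Fintype V] [DecidableEq V] (G : SimpleGraph V) (red : Sym2 V → Bool)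
    (R : ℕ) (t' : ℤ) (hR : R = 4 ^ indepNum G) (ht' : 256 * (R : ℤ) * R ≤ t')
    (M : Finset (Sym2 V)) (hM : IsPM G M)
    (𝒞 : Finset (Finset (Sym2 V))) (h𝒞 : IsAltCycleSet G M 𝒞)
    (C : Finset (Sym2 V)) (hC : C ∈ 𝒞) (σ : ℤ) (hσ : σ = 1 ∨ σ = -1)
    (htot : ∑ C' ∈ 𝒞, σ * wSum red M C' ≤ t')
    (hbig : 2 * t' ≤ σ * wSum red M C) :
    HasZeroSkipCycleSet G red M 𝒞 := by
  classical
  have hR1 : 1 ≤ R := by rw [hR]; exact Nat.one_le_pow _ _ (by norm_num)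
  have hR' : (4 : ℤ) ^ indepNum G = R := by rw [hR]; push_cast; rfl
  have hRR : (R : ℤ) ≤ R * R := by nlinarith [(by exact_mod_cast hR1 : (1:ℤ) ≤ R)]
  have hR1' : (1 : ℤ) ≤ R := by exact_mod_cast hR1
  obtain ⟨a, l, ha2, ha4, hlen, hpw, hlw⟩ := aux_skipList red (h𝒞.1 C hC) hM σ hσ (24 * R) (by
    rw [hR']; push_cast; nlinarith)
  have hσσ : σ * σ = 1 := by rcases hσ with rfl | rfl <;> norm_num
  by_cases hcase : ∃ D ∈ 𝒞, σ * wSum red M D ≤ -(24 * R)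
  · obtain ⟨D, hD, hDw⟩ := hcase
    obtain ⟨b, l', hb2, hb4, hlen', hpw', hlw'⟩ := aux_skipList red (h𝒞.1 D hD) hM (-σ)
      (by rcases hσ with rfl | rfl <;> simp) 4 (by rw [hR']; push_cast; linarith)
    obtain ⟨L1, hL1, hL1p, hL1C, hL1s⟩ := aux_lift red hC l hpw _ hlw b (by omega)
    obtain ⟨L2, hL2, hL2p, hL2C, hL2s⟩ := aux_lift red hD l' hpw' _ hlw' a (by omega)
    refine ⟨L1 ++ L2, ∅, by simp, Or.inl ?_, ?_, by simp, ?_⟩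
    · intro h
      have := congrArg List.length h
      simp at this
      rw [this.1] at hL1
      simp at hL1
      omega
    · rw [List.pairwise_append]
      refine ⟨hL1p, hL2p, ?_⟩
      intro T hT T' hT'
      left
      rw [hL1C T hT, hL2C T' hT']
      rintro rfl
      nlinarith
    · rw [List.map_append, List.sum_append, hL1s, hL2s]
      simp
      ring
  · push Not at hcase
    have hpos : 0 < σ * wSum red M C := by nlinarith
    have hcard : 7 ≤ (𝒞.filter (fun D => σ * wSum red M D < 0)).card := by
      by_contra hlt
      have h1 := Finset.sum_filter_add_sum_filter_not 𝒞 (fun D => σ * wSum red M D < 0)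
        (fun D => σ * wSum red M D)
      have h2 : σ * wSum red M C ≤ ∑ D ∈ 𝒞.filter (fun D => ¬ σ * wSum red M D < 0),
          σ * wSum red M D := by
        apply Finset.single_le_sum (f := fun D => σ * wSum red M D)
        · intro D hD
          exact not_lt.1 (Finset.mem_filter.1 hD).2
        · exact Finset.mem_filter.2 ⟨hC, by omega⟩
      have h3 := Finset.card_nsmul_le_sum (𝒞.filter (fun D => σ * wSum red M D < 0))
        (fun D => σ * wSum red M D) (-(24 * R : ℤ)) (by
          intro D hD
          exact (hcase D (Finset.mem_filter.1 hD).1).le)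
      have h4 : ((𝒞.filter (fun D => σ * wSum red M D < 0)).card : ℤ) ≤ 6 := by
        have : (𝒞.filter (fun D => σ * wSum red M D < 0)).card ≤ 6 := by omega
        exact_mod_cast this
      rw [nsmul_eq_mul] at h3
      nlinarith
    obtain ⟨D, hD, hDc, hDdvd⟩ := Int.erdos_ginzburg_ziv (n := a)
      (s := 𝒞.filter (fun D => σ * wSum red M D < 0)) (fun D => -σ * wSum red M D) (by omega)
    obtain ⟨m, hm⟩ := hDdvd
    have hapos : (0 : ℤ) < a := by exact_mod_cast (by omega : 0 < a)
    have hm0 : 0 ≤ m := by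
      have h1 : 0 ≤ ∑ D' ∈ D, -σ * wSum red M D' := by
        apply Finset.sum_nonneg
        intro D' hD'
        have := (Finset.mem_filter.1 (hD hD')).2
        linarith
      rw [hm] at h1
      exact nonneg_of_mul_nonneg_right h1 hapos
    have hm1 : m ≤ 24 * R := by
      have h1 := Finset.sum_le_card_nsmul D (fun D' => -σ * wSum red M D') (24 * R : ℤ) (by
        intro D' hD'
        have := hcase D' (Finset.mem_filter.1 (hD hD')).1
        show -σ * wSum red M D' ≤ _
        linarith)
      rw [hm, hDc, nsmul_eq_mul] at h1
      exact le_of_mul_le_mul_left h1 hapos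
    obtain ⟨m, rfl⟩ := Int.eq_ofNat_of_zero_le hm0
    obtain ⟨L1, hL1, hL1p, hL1C, hL1s⟩ := aux_lift red hC l hpw _ hlw m (by
      have : m ≤ 24 * R := by exact_mod_cast hm1
      omega)
    refine ⟨L1, D, fun D' hD' => (Finset.mem_filter.1 (hD hD')).1, Or.inr ?_, hL1p, ?_, ?_⟩
    · rw [← Finset.card_pos]; omega
    · intro T hT hTD
      rw [hL1C T hT] at hTD
      have := (Finset.mem_filter.1 (hD hTD)).2
      linarith
    · rw [hL1s]
      rw [← Finset.mul_sum] at hm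
      have h1 : ∑ D' ∈ D, wSum red M D' = -σ * (a * m) := by
        rw [← hm]
        calc _ = (σ * σ) * ∑ D' ∈ D, wSum red M D' := by rw [hσσ, one_mul]
          _ = _ := by ring
      rw [h1]
      ring

/-- Bounded cycle weights: let `t ≥ 8·4^α` and `t' = 4t²`. If `𝒞` is a set of
vertex-disjoint `M`-alternating cycles with `|w_M(𝒞)| ≤ t'` containing a cycle `C` with
`|w_M(C)| ≥ 2t'`, then `𝒞` contains a 0-skip-cycle set. -/
theorem heavy_cycle_gives_zero_skip_cycle_set
    {V : Type*} [Fintype V] [DecidableEq V] (G : SimpleGraph V) (red : Sym2 V → Bool)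
    (t t' : ℕ) (ht : 8 * 4 ^ indepNum G ≤ t) (ht' : t' = 4 * t ^ 2)
    (M : Finset (Sym2 V)) (hM : IsPM G M)
    (𝒞 : Finset (Finset (Sym2 V))) (h𝒞 : IsAltCycleSet G M 𝒞)
    (C : Finset (Sym2 V)) (hC : C ∈ 𝒞)
    (htot : |∑ C' ∈ 𝒞, wSum red M C'| ≤ (t' : ℤ))
    (hbig : (2 * t' : ℤ) ≤ |wSum red M C|) :
    HasZeroSkipCycleSet G red M 𝒞 := by
  have hR : (8 * ((4 ^ indepNum G : ℕ) : ℤ)) ≤ t := by exact_mod_cast ht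
  have hR0 : (0 : ℤ) ≤ ((4 ^ indepNum G : ℕ) : ℤ) := by positivity
  have h256 : 256 * ((4 ^ indepNum G : ℕ) : ℤ) * ((4 ^ indepNum G : ℕ) : ℤ) ≤ (t' : ℤ) := by
    rw [ht']
    push_cast at hR hR0 ⊢
    nlinarith
  rw [abs_le] at htot
  rcases le_abs.1 hbig with h | h
  · refine aux_main G red _ t' rfl h256 M hM 𝒞 h𝒞 C hC 1 (Or.inl rfl) ?_ (by linarith)
    rw [← Finset.mul_sum]
    linarith [htot.2]
  · refine aux_main G red _ t' rfl h256 M hM 𝒞 h𝒞 C hC (-1) (Or.inr rfl) ?_ (by linarith)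
    rw [← Finset.mul_sum]
    linarith [htot.1]
end

section
/- Let t ≥ 3 be an integer, M a perfect matching of G, and 𝒞 a set of vertex-disjoint M-alternating cycles such that |w_M(𝒞)| ≤ t, |w_M(C)| ≤ 2t for every C ∈ 𝒞, and |𝒞| ≥ 10t³. Then 𝒞 contains a 0-skip-cycle set. -/
open Finset

theorem aux_count {ι : Type*} (s : Finset ι) (f : ι → ℤ) (t : ℕ) (ht : 3 ≤ t)
    (h0 : ∀ i ∈ s, f i ≠ 0) (hb : ∀ i ∈ s, |f i| ≤ 2 * t) (hs : |∑ i ∈ s, f i| ≤ t)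
    (hc : 10 * t ^ 3 ≤ s.card) :
    ∃ v : ℤ, 0 < v ∧ v ≤ 2 * t ∧ 2 * t ≤ (s.filter fun i => f i = v).card := by
  classical
  by_contra hcon
  push Not at hcon
  have hP : (s.filter fun i => 0 < f i).card ≤ 2 * t * (Finset.Icc (1 : ℤ) (2 * t)).card := by
    apply Finset.card_le_mul_card_image_of_maps_to (f := f)
    · intro i hi
      have hi' := Finset.mem_filter.1 hi
      have := abs_le.1 (hb i hi'.1)
      exact Finset.mem_coe.2 (Finset.mem_Icc.2 ⟨hi'.2, this.2⟩)
    · intro v hv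
      rw [Finset.mem_Icc] at hv
      have h1 := hcon v (by omega) hv.2
      refine le_trans (Finset.card_le_card ?_) h1.le
      intro i hi
      simp only [Finset.mem_filter] at hi ⊢
      exact ⟨hi.1.1, hi.2⟩
  have hI : (Finset.Icc (1 : ℤ) (2 * t)).card = 2 * t := by
    rw [Int.card_Icc]; omega
  rw [hI] at hP
  have hsplit := Finset.sum_filter_add_sum_filter_not s (fun i => 0 < f i) f
  have hcard := Finset.card_filter_add_card_filter_not (s := s) (fun i => 0 < f i)
  have h1 : ∑ i ∈ s.filter (fun i => 0 < f i), f i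
      ≤ (s.filter fun i => 0 < f i).card • (2 * t : ℤ) := by
    apply Finset.sum_le_card_nsmul
    intro i hi
    exact (abs_le.1 (hb i (Finset.mem_filter.1 hi).1)).2
  have h2 : ∑ i ∈ s.filter (fun i => ¬ 0 < f i), f i
      ≤ (s.filter fun i => ¬ 0 < f i).card • (-1 : ℤ) := by
    apply Finset.sum_le_card_nsmul
    intro i hi
    have hi' := Finset.mem_filter.1 hi
    have := h0 i hi'.1
    omega
  rw [nsmul_eq_mul] at h1 h2
  have h3 := (abs_le.1 hs).1
  generalize (s.filter fun i => 0 < f i).card = p at *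
  generalize (s.filter fun i => ¬ 0 < f i).card = n at *
  rw [← hcard] at hc
  zify at hP hc ht
  have h4 : (p : ℤ) * (2 * t) ≤ (2 * t * (2 * t)) * (2 * t) := by gcongr
  nlinarith [mul_nonneg (sub_nonneg.2 ht) (sq_nonneg (t : ℤ)), mul_nonneg (sub_nonneg.2 ht) (show (0:ℤ) ≤ t by omega)]

/-- Not many cycles: let `t ≥ 3` and `𝒞` a set of vertex-disjoint `M`-alternating cycles
with `|w_M(𝒞)| ≤ t`, `|w_M(C)| ≤ 2t` for every `C ∈ 𝒞` and `|𝒞| ≥ 10t³`. Then `𝒞`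
contains a 0-skip-cycle set. -/
theorem many_cycles_give_zero_skip_cycle_set
    {V : Type*} [Fintype V] [DecidableEq V] (G : SimpleGraph V) (red : Sym2 V → Bool)
    (t : ℕ) (ht : 3 ≤ t)
    (M : Finset (Sym2 V)) (hM : IsPM G M)
    (𝒞 : Finset (Finset (Sym2 V))) (h𝒞 : IsAltCycleSet G M 𝒞)
    (htot : |∑ C ∈ 𝒞, wSum red M C| ≤ (t : ℤ))
    (heach : ∀ C ∈ 𝒞, |wSum red M C| ≤ (2 * t : ℤ))
    (hmany : 10 * t ^ 3 ≤ 𝒞.card) :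
    HasZeroSkipCycleSet G red M 𝒞 := by
  classical
  suffices h : ∃ D ⊆ 𝒞, D.Nonempty ∧ ∑ C ∈ D, wSum red M C = 0 by
    obtain ⟨D, hD, hne, hsum⟩ := h
    exact ⟨[], D, hD, Or.inr hne, List.Pairwise.nil, by simp, by simp [hsum]⟩
  by_cases h0 : ∀ C ∈ 𝒞, wSum red M C ≠ 0
  · obtain ⟨a, ha, ha', hca⟩ := aux_count 𝒞 (wSum red M) t ht h0 heach htot hmany
    obtain ⟨b, hb, hb', hcb⟩ := aux_count 𝒞 (fun C => - wSum red M C) t ht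
      (fun C hC => neg_ne_zero.2 (h0 C hC)) (fun C hC => by simpa using heach C hC)
      (by simpa [Finset.sum_neg_distrib] using htot) hmany
    obtain ⟨A, hA, hAc⟩ := Finset.exists_subset_card_eq (show b.toNat ≤ _ from le_trans (by omega) hca)
    obtain ⟨B, hB, hBc⟩ := Finset.exists_subset_card_eq (show a.toNat ≤ _ from le_trans (by omega) hcb)
    have hA1 : ∀ C ∈ A, wSum red M C = a := fun C hC => (Finset.mem_filter.1 (hA hC)).2
    have hB1 : ∀ C ∈ B, wSum red M C = -b := fun C hC => by
      have := (Finset.mem_filter.1 (hB hC)).2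
      omega
    have hd : Disjoint A B := by
      rw [Finset.disjoint_left]
      intro C h1 h2
      have := hA1 C h1
      have := hB1 C h2
      omega
    refine ⟨A ∪ B, Finset.union_subset (hA.trans (Finset.filter_subset _ _))
      (hB.trans (Finset.filter_subset _ _)), ?_, ?_⟩
    · apply Finset.Nonempty.inl
      rw [← Finset.card_pos]; omega
    · rw [Finset.sum_union hd, Finset.sum_congr rfl hA1, Finset.sum_congr rfl hB1]
      simp only [Finset.sum_const, hAc, hBc, nsmul_eq_mul, Int.natCast_toNat_eq_self.2 ha.le,
        Int.natCast_toNat_eq_self.2 hb.le]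
      ring
  · push Not at h0
    obtain ⟨C, hC, hw⟩ := h0
    exact ⟨{C}, by simpa using hC, by simp, by simpa using hw⟩
end
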